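/- arXiv:2108.00711 — 2 statements merged into one kernel-verified Lean document; each statement's English description precedes it below -/
import Mathlib

section
/- Let N ≥ 1 and T ∈ ℕ. Suppose f : ℤ^N × ℝ → ℝ is continuous in the second variable and satisfies the growth condition |f(x,u)| ≤ a(|u| + |u|^{q−1}) for some a > 0 and q > 2, together with: (i) V and f(·,u) are T-periodic in x (V(x+Te_i) = V(x) and f(x+Te_i,u) = f(x,u) for all x, u and 1 ≤ i ≤ N) and V(x) > 0 for all x; (ii) f(x,u) = o(u) uniformly in x as u → 0; (iii) for each x, u ↦ f(x,u)/|u| is strictly increasing on (−∞,0) and on (0,∞); (iv) F(x,u)/u² → ∞ uniformly in x as |u| → ∞, where F(x,u) = ∫₀ᵘ f(x,s) ds. (Periodicity and positivity of V give 0 < C₁ ≤ V ≤ C₂.) Then the equation −Δu + V(x)u = f(x,u) has a ground state solution in H¹(ℤ^N): there exists a nonzero u ∈ H¹(ℤ^N) with Φ'(u) = 0 and Φ(u) = inf{Φ(v) : v ∈ H¹(ℤ^N)\{0}, Φ'(v)v = 0}. -/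
open scoped ENNReal

noncomputable section

/-- `H¹(V)`: as a set, the ℓ²-summable real functions on the vertex set;
the `H¹` norm is equivalent to the ℓ² norm by the uniform degree bound. -/
abbrev H1 (Vtx : Type*) := lp (fun _ : Vtx => ℝ) 2

variable {Vtx : Type*}

/-- `Γ(u,v)(x) = (1/2) Σ_{y∼x} (u(y)-u(x))(v(y)-v(x))`. -/
def gammaProd (adj : Vtx → Vtx → Prop) (u v : Vtx → ℝ) (x : Vtx) : ℝ :=
  (1/2) * ∑' y : {y : Vtx // adj x y}, (u y.1 - u x) * (v y.1 - v x)

/-- `|∇u|²(x) = (1/2) Σ_{y∼x} (u(y)-u(x))²`. -/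
def gradSq (adj : Vtx → Vtx → Prop) (u : Vtx → ℝ) (x : Vtx) : ℝ :=
  gammaProd adj u u x

/-- `Δu(x) = Σ_{y∼x} (u(y)-u(x))`. -/
def graphLap (adj : Vtx → Vtx → Prop) (u : Vtx → ℝ) (x : Vtx) : ℝ :=
  ∑' y : {y : Vtx // adj x y}, (u y.1 - u x)

/-- the norm `‖u‖` induced by the potential `V`:
`‖u‖² = Σ_x (|∇u|²(x) + V(x)u(x)²)`. -/
def nrmV (adj : Vtx → Vtx → Prop) (Vp : Vtx → ℝ) (u : Vtx → ℝ) : ℝ :=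
  Real.sqrt (∑' x, (gradSq adj u x + Vp x * (u x)^2))

/-- the `V`-norm of an element of `H¹`. -/
def nrmH (adj : Vtx → Vtx → Prop) (Vp : Vtx → ℝ) (u : H1 Vtx) : ℝ :=
  nrmV adj Vp (fun y => u y)

/-- `⟨u,v⟩ = Σ_x (Γ(u,v)(x) + V(x)u(x)v(x))`. -/
def iprodH (adj : Vtx → Vtx → Prop) (Vp : Vtx → ℝ) (u v : H1 Vtx) : ℝ :=
  ∑' x, (gammaProd adj (fun y => u y) (fun y => v y) x + Vp x * u x * v x)

/-- the variational functional `Φ(u) = ½‖u‖² − Σ_x F(x,u(x))`. -/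
def PhiF (adj : Vtx → Vtx → Prop) (Vp : Vtx → ℝ) (F : Vtx → ℝ → ℝ) (u : H1 Vtx) : ℝ :=
  (1/2) * ∑' x, (gradSq adj (fun y => u y) x + Vp x * (u x)^2) - ∑' x, F x (u x)

/-- the Nehari manifold `N = {u ∈ H¹\{0} : Φ'(u)u = 0}`. -/
def Nehari (adj : Vtx → Vtx → Prop) (Vp : Vtx → ℝ) (F : Vtx → ℝ → ℝ) : Set (H1 Vtx) :=
  {u | u ≠ 0 ∧ fderiv ℝ (PhiF adj Vp F) u u = 0}

/-- adjacency of the lattice graph `ℤ^N`. -/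
def adjZ (N : ℕ) (x y : Fin N → ℤ) : Prop := (∑ i, (x i - y i).natAbs) = 1

end

/-!
The proof is the Nehari method of Szulkin and Weth. On every ray `ℝ₊ u` the derivative of the energy
`Φ`, divided by the parameter, is strictly decreasing, so the ray meets the Nehari set exactly once,
at the maximum of `Φ` on the ray. Hence a minimizer of `Φ` over the Nehari set is a critical point:
if `Φ'(u) v < 0`, the intermediate value theorem finds a Nehari point near `u` on a segment
`s u + e v` with `e > 0`, and its energy is smaller.

For the existence of a minimizer, translate the members of a minimizing sequence `uₙ` so that they
do not vanish uniformly on a fixed finite set; the sequence is bounded and has a nonzero pointwise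
limit `u`. Since `Φ(s uₙ) = Φ(s u) + Φ(s (uₙ - u)) + o(1)`, the Nehari multiple of `u` attains the
infimum. The argument uses only that the graph has bounded degree and finitely many orbits under the
translations.
-/

open Filter Topology Set

noncomputable section

/-! ### The Nehari set of a functional on a normed space -/

section Nehari

variable {E : Type*} [NormedAddCommGroup E] [NormedSpace ℝ E] {Φ : E → ℝ} {u v w : E}

/-- The Nehari set of `Φ`: the nonzero `u` with `Φ'(u)u = 0`. It contains all nonzero critical
points of `Φ`. -/
def nehariSet (Φ : E → ℝ) : Set E := {u | u ≠ 0 ∧ fderiv ℝ Φ u u = 0}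

/-- The fibering condition of the Nehari method: `t ↦ Φ'(tu)u / t` is strictly decreasing along
each ray, so that each ray meets `nehariSet Φ` at most once, at the maximum of `Φ` on the ray. -/
def StrictFibering (Φ : E → ℝ) : Prop :=
  ∀ u ≠ 0, StrictAntiOn (fun t : ℝ => fderiv ℝ Φ (t • u) u / t) (Ioi 0)

theorem hasDerivAt_apply_add_smul (hΦ : Differentiable ℝ Φ) (w v : E) (t : ℝ) :
    HasDerivAt (fun s : ℝ => Φ (w + s • v)) (fderiv ℝ Φ (w + t • v) v) t :=
  (hΦ _).hasFDerivAt.comp_hasDerivAt t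
    (by simpa using ((hasDerivAt_id t).smul_const v).const_add w)

theorem hasDerivAt_apply_smul (hΦ : Differentiable ℝ Φ) (u : E) (t : ℝ) :
    HasDerivAt (fun s : ℝ => Φ (s • u)) (fderiv ℝ Φ (t • u) u) t := by
  simpa using hasDerivAt_apply_add_smul hΦ 0 u t

theorem exists_smul_mem_nehariSet (hΦ : ContDiff ℝ 1 Φ) (hu : u ≠ 0) {s₁ s₂ : ℝ} (hs₁ : 0 < s₁)
    (hs₁u : 0 ≤ fderiv ℝ Φ (s₁ • u) u) (hs₂ : 0 < s₂) (hs₂u : Φ (s₂ • u) ≤ Φ 0) :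
    ∃ t : ℝ, 0 < t ∧ t • u ∈ nehariSet Φ := by
  have hder := hasDerivAt_apply_smul (hΦ.differentiable one_ne_zero) u
  obtain ⟨c, hc, hcu⟩ := exists_hasDerivAt_eq_slope _ _ hs₂
    (fun t _ => (hder t).continuousAt.continuousWithinAt) fun t _ => hder t
  have hcu' : fderiv ℝ Φ (c • u) u ≤ 0 := by
    rw [hcu]
    exact div_nonpos_of_nonpos_of_nonneg (by simpa using hs₂u) (by simpa using hs₂.le)
  have hcont : Continuous fun t : ℝ => fderiv ℝ Φ (t • u) u :=
    (hΦ.continuous_fderiv_apply one_ne_zero).comp (by fun_prop : Continuous fun t : ℝ => (t • u, u))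
  obtain ⟨t, ht, htu⟩ := intermediate_value_uIcc hcont.continuousOn
    (mem_uIcc.2 (Or.inr ⟨hcu', hs₁u⟩) : (0 : ℝ) ∈ uIcc _ _)
  have ht₀ : 0 < t := (lt_min hs₁ hc.1).trans_le ht.1
  exact ⟨t, ht₀, smul_ne_zero ht₀.ne' hu, by simp [htu]⟩

theorem exists_fderiv_apply_neg_near (hΦ : ContDiff ℝ 1 Φ) (hu : u ≠ 0)
    (hv : fderiv ℝ Φ u v < 0) :
    ∃ r ∈ Ioo (0 : ℝ) 1, ∀ s ∈ Icc (1 - r) (1 + r), ∀ e ∈ Icc 0 r,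
      s • u + e • v ≠ 0 ∧ fderiv ℝ Φ (s • u + e • v) v < 0 := by
  let p : ℝ × ℝ → E := fun q => q.1 • u + q.2 • v
  have hp : Continuous p := by fun_prop
  have hp₁ : p (1, 0) = u := by simp [p]
  have hnear : ∀ᶠ q in 𝓝 ((1, 0) : ℝ × ℝ), p q ≠ 0 ∧ fderiv ℝ Φ (p q) v < 0 :=
    (hp.continuousAt.eventually_ne (hp₁.trans_ne hu)).and
      ((((hΦ.continuous_fderiv_apply one_ne_zero).comp (hp.prodMk continuous_const)).tendsto _)
        |>.eventually_lt_const (by simpa [hp₁] using hv))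
  obtain ⟨r', hr', hball⟩ := Metric.nhds_basis_closedBall.eventually_iff.1 hnear
  obtain ⟨r, hr, hrr⟩ := exists_between (lt_min hr' one_pos)
  have hr₁ : r ≤ r' := hrr.le.trans (min_le_left _ _)
  refine ⟨r, ⟨hr, hrr.trans_le (min_le_right _ _)⟩, fun s hs e he =>
    hball (x := (s, e)) (Metric.mem_closedBall.2 (max_le ?_ ?_))⟩
  · exact (abs_le.2 ⟨by linarith [hs.1], by linarith [hs.2]⟩ : |s - 1| ≤ r')
  · simpa [abs_of_nonneg he.1] using he.2.trans hr₁

theorem map_mem_nehariSet {T : E →L[ℝ] E} (hΦ : Differentiable ℝ Φ) (hT : Function.Injective T)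
    (hΦT : ∀ v, Φ (T v) = Φ v) (hu : u ∈ nehariSet Φ) : T u ∈ nehariSet Φ := by
  refine ⟨(map_ne_zero_iff T hT).2 hu.1, ?_⟩
  have hfd : fderiv ℝ Φ u = (fderiv ℝ Φ (T u)).comp T := by
    have h := fderiv_comp u (hΦ (T u)) T.differentiableAt
    rwa [T.fderiv, funext hΦT (f := Φ ∘ T)] at h
  simpa [hfd] using hu.2

namespace StrictFibering

theorem fderiv_smul_pos (h : StrictFibering Φ) (hu : u ∈ nehariSet Φ) {s : ℝ} (hs : 0 < s)
    (hs₁ : s < 1) : 0 < fderiv ℝ Φ (s • u) u := by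
  have := h u hu.1 (mem_Ioi.2 hs) (mem_Ioi.2 one_pos) hs₁
  simpa [hu.2, hs] using this

theorem fderiv_smul_neg (h : StrictFibering Φ) (hu : u ∈ nehariSet Φ) {s : ℝ} (hs : 1 < s) :
    fderiv ℝ Φ (s • u) u < 0 := by
  have hs₀ := one_pos.trans hs
  have := h u hu.1 (mem_Ioi.2 one_pos) (mem_Ioi.2 hs₀) hs
  simpa [hu.2, div_lt_iff₀ hs₀] using this

theorem strictMonoOn_apply_smul (h : StrictFibering Φ) (hΦ : Differentiable ℝ Φ)
    (hu : u ∈ nehariSet Φ) : StrictMonoOn (fun s : ℝ => Φ (s • u)) (Icc 0 1) := by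
  have hder := hasDerivAt_apply_smul hΦ u
  refine strictMonoOn_of_deriv_pos (convex_Icc 0 1)
    (fun s _ => (hder s).continuousAt.continuousWithinAt) fun s hs => ?_
  rw [interior_Icc] at hs
  simpa [(hder s).deriv] using h.fderiv_smul_pos hu hs.1 hs.2

theorem strictAntiOn_apply_smul (h : StrictFibering Φ) (hΦ : Differentiable ℝ Φ)
    (hu : u ∈ nehariSet Φ) : StrictAntiOn (fun s : ℝ => Φ (s • u)) (Ici 1) := by
  have hder := hasDerivAt_apply_smul hΦ u
  refine strictAntiOn_of_deriv_neg (convex_Ici 1)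
    (fun s _ => (hder s).continuousAt.continuousWithinAt) fun s hs => ?_
  rw [interior_Ici] at hs
  simpa [(hder s).deriv] using h.fderiv_smul_neg hu hs

theorem apply_smul_le (h : StrictFibering Φ) (hΦ : Differentiable ℝ Φ) (hu : u ∈ nehariSet Φ)
    {s : ℝ} (hs : 0 ≤ s) : Φ (s • u) ≤ Φ u := by
  rcases le_total s 1 with hs₁ | hs₁
  · simpa using (h.strictMonoOn_apply_smul hΦ hu).monotoneOn ⟨hs, hs₁⟩ ⟨zero_le_one, le_rfl⟩ hs₁
  · simpa using (h.strictAntiOn_apply_smul hΦ hu).antitoneOn self_mem_Ici hs₁ hs₁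

theorem strictMonoOn_of_smul_mem (h : StrictFibering Φ) (hΦ : Differentiable ℝ Φ) {t : ℝ}
    (ht : 0 < t) (hu : t • u ∈ nehariSet Φ) :
    StrictMonoOn (fun s : ℝ => Φ (s • u)) (Icc 0 t) := by
  intro a ha b hb hab
  have hmem {s : ℝ} (hs : s ∈ Icc 0 t) : s / t ∈ Icc (0 : ℝ) 1 :=
    ⟨div_nonneg hs.1 ht.le, (div_le_one ht).2 hs.2⟩
  simpa [smul_smul, ht.ne'] using
    h.strictMonoOn_apply_smul hΦ hu (hmem ha) (hmem hb) (div_lt_div_of_pos_right hab ht)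

theorem eventually_exists_fderiv_eq_zero (h : StrictFibering Φ) (hΦ : ContDiff ℝ 1 Φ)
    (hu : u ∈ nehariSet Φ) (v : E) {r : ℝ} (hr : 0 < r) (hr₁ : r < 1) :
    ∀ᶠ e : ℝ in 𝓝 0, ∃ s ∈ Icc (1 - r) (1 + r),
      fderiv ℝ Φ (s • u + e • v) (s • u + e • v) = 0 := by
  let g : ℝ → ℝ → ℝ := fun s e => fderiv ℝ Φ (s • u + e • v) (s • u + e • v)
  have hg {α : Type} [TopologicalSpace α] {s e : α → ℝ} (hs : Continuous s) (he : Continuous e) :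
      Continuous fun a => g (s a) (e a) :=
    (hΦ.continuous_fderiv_apply one_ne_zero).comp
      (by fun_prop : Continuous fun a => (s a • u + e a • v, s a • u + e a • v))
  have hleft : 0 < g (1 - r) 0 := by
    simpa [g] using mul_pos (sub_pos.2 hr₁)
      (h.fderiv_smul_pos hu (sub_pos.2 hr₁) (sub_lt_self 1 hr))
  have hright : g (1 + r) 0 < 0 := by
    simpa [g] using mul_neg_of_pos_of_neg (by positivity : 0 < 1 + r)
      (h.fderiv_smul_neg hu (lt_add_of_pos_right 1 hr))
  filter_upwards [((hg continuous_const continuous_id).tendsto 0).eventually_const_lt hleft,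
    ((hg continuous_const continuous_id).tendsto 0).eventually_lt_const hright] with e he₁ he₂
  exact intermediate_value_Icc' (by linarith) (hg continuous_id continuous_const).continuousOn
    ⟨he₂.le, he₁.le⟩

theorem fderiv_eq_zero_of_isMinOn (h : StrictFibering Φ) (hΦ : ContDiff ℝ 1 Φ)
    (hu : u ∈ nehariSet Φ) (hmin : IsMinOn Φ (nehariSet Φ) u) : fderiv ℝ Φ u = 0 := by
  by_contra hne
  obtain ⟨v, hv⟩ : ∃ v, fderiv ℝ Φ u v < 0 := by
    obtain ⟨v, hv⟩ := DFunLike.ne_iff.1 hne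
    rcases lt_or_gt_of_ne hv with hv | hv
    · exact ⟨v, hv⟩
    · exact ⟨-v, by simpa using hv⟩
  obtain ⟨r, ⟨hr, hr₁⟩, hbox⟩ := exists_fderiv_apply_neg_near hΦ hu.1 hv
  obtain ⟨e, ⟨s, hs, hcrit⟩, he⟩ := ((h.eventually_exists_fderiv_eq_zero hΦ hu v hr
    hr₁).filter_mono nhdsWithin_le_nhds |>.and (Ioo_mem_nhdsGT hr)).exists
  have hder := hasDerivAt_apply_add_smul (hΦ.differentiable one_ne_zero) (s • u) v
  have hanti : StrictAntiOn (fun e : ℝ => Φ (s • u + e • v)) (Icc 0 r) := by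
    refine strictAntiOn_of_deriv_neg (convex_Icc 0 r)
      (fun e _ => (hder e).continuousAt.continuousWithinAt) fun e he => ?_
    rw [interior_Icc] at he
    simpa [(hder e).deriv] using (hbox s hs e (Ioo_subset_Icc_self he)).2
  have hlt : Φ (s • u + e • v) < Φ u := calc
    Φ (s • u + e • v) < Φ (s • u) := by
      simpa using hanti (left_mem_Icc.2 hr.le) (Ioo_subset_Icc_self he) he.1
    _ ≤ Φ u := h.apply_smul_le (hΦ.differentiable one_ne_zero) hu (by linarith [hs.1])
  exact hlt.not_ge (hmin ⟨(hbox s hs e (Ioo_subset_Icc_self he)).1, hcrit⟩)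

theorem apply_le_or_add_apply_le (h : StrictFibering Φ) (hΦ : Differentiable ℝ Φ) (h₀ : Φ 0 = 0)
    {t ρ C m B : ℝ} (ht : 0 < t) (hu : t • u ∈ nehariSet Φ)
    (hw : w ≠ 0 → ∃ s : ℝ, 0 < s ∧ s • w ∈ nehariSet Φ) (hwC : ‖w‖ ≤ C) (hρ : 0 < ρ)
    (hnorm : ∀ v ∈ nehariSet Φ, ρ ≤ ‖v‖) (hm : ∀ v ∈ nehariSet Φ, m ≤ Φ v)
    (hB : ∀ s ∈ Icc 0 t, Φ (s • u) + Φ (s • w) ≤ B) :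
    Φ (t • u) ≤ B ∨ m + Φ (min t (ρ / C) • u) ≤ B := by
  have ht_mem := right_mem_Icc.2 ht.le
  rcases eq_or_ne w 0 with rfl | hw₀
  · exact Or.inl (by simpa [h₀] using hB t ht_mem)
  obtain ⟨s, hs, hsw⟩ := hw hw₀
  rcases le_total t s with hts | hst
  · have : Φ 0 ≤ Φ (t • w) := by
      simpa using (h.strictMonoOn_of_smul_mem hΦ hs hsw).monotoneOn (left_mem_Icc.2 hs.le)
        ⟨ht.le, hts⟩ ht.le
    exact Or.inl (by linarith [hB t ht_mem])
  · have hC : 0 < C := (norm_pos_iff.2 hw₀).trans_le hwC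
    have hρs : ρ / C ≤ s := (div_le_iff₀ hC).2 <| calc
      ρ ≤ s * ‖w‖ := by simpa [norm_smul, abs_of_pos hs] using hnorm _ hsw
      _ ≤ s * C := by gcongr
    have hτs : min t (ρ / C) ≤ s := (min_le_right _ _).trans hρs
    have : Φ (min t (ρ / C) • u) ≤ Φ (s • u) :=
      (h.strictMonoOn_of_smul_mem hΦ ht hu).monotoneOn
        ⟨le_min ht.le (by positivity), min_le_left _ _⟩ ⟨hs.le, hst⟩ hτs
    exact Or.inr (by linarith [hB s ⟨hs.le, hst⟩, hm _ hsw])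

end StrictFibering

end Nehari

/-! ### Superlinear nonlinearities -/

section Primitive

variable {g G : ℝ → ℝ} {L M : ℝ}

theorem exists_apply_add_sub_eq_mul (hG : ∀ t, HasDerivAt G (g t) t) (a b : ℝ) :
    ∃ θ ∈ Icc (0 : ℝ) 1, G (a + b) - G a = g (a + θ * b) * b := by
  have hder (s : ℝ) : HasDerivAt (fun s => G (a + s * b)) (g (a + s * b) * b) s :=
    (hG (a + s * b)).comp s (by simpa using ((hasDerivAt_id s).mul_const b).const_add a)
  obtain ⟨θ, hθ, h⟩ := exists_hasDerivAt_eq_slope _ _ one_pos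
    (fun s _ => (hder s).continuousAt.continuousWithinAt) fun s _ => hder s
  exact ⟨θ, Ioo_subset_Icc_self hθ, by simpa using h.symm⟩

theorem abs_apply_add_sub_le (hG : ∀ t, HasDerivAt G (g t) t) (hL : 0 ≤ L)
    (hg : ∀ t, |t| ≤ M → |g t| ≤ L * |t|) {a b : ℝ} (hab : |a| + |b| ≤ M) :
    |G (a + b) - G a| ≤ L * (|a| + |b|) * |b| := by
  obtain ⟨θ, ⟨hθ₀, hθ₁⟩, h⟩ := exists_apply_add_sub_eq_mul hG a b
  have hle : |a + θ * b| ≤ |a| + |b| := calc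
    |a + θ * b| ≤ |a| + |θ| * |b| := (abs_add_le _ _).trans_eq (by rw [abs_mul])
    _ ≤ |a| + |b| := by
      rw [abs_of_nonneg hθ₀]
      gcongr
      exact mul_le_of_le_one_left (abs_nonneg b) hθ₁
  rw [h, abs_mul]
  gcongr
  exact (hg _ (hle.trans hab)).trans (by gcongr)

theorem abs_apply_le_mul_sq (hG : ∀ t, HasDerivAt G (g t) t) (hG₀ : G 0 = 0) (hL : 0 ≤ L)
    (hg : ∀ t, |t| ≤ M → |g t| ≤ L * |t|) {b : ℝ} (hb : |b| ≤ M) : |G b| ≤ L * b ^ 2 := by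
  have := abs_apply_add_sub_le hG hL hg (a := 0) (b := b) (by simpa using hb)
  simpa [hG₀, mul_assoc, ← sq] using this

theorem abs_apply_add_sub_sub_le (hG : ∀ t, HasDerivAt G (g t) t) (hG₀ : G 0 = 0) (hL : 0 ≤ L)
    (hg : ∀ t, |t| ≤ M → |g t| ≤ L * |t|) {a b : ℝ} (hab : |a| + |b| ≤ M) :
    |G (a + b) - G a - G b| ≤ 3 * L * |a * b| := by
  wlog hle : |b| ≤ |a| generalizing a b
  · rw [add_comm a b, mul_comm a b, sub_right_comm]
    exact this (by linarith) (le_of_not_ge hle)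
  have hb : L * b ^ 2 ≤ L * (|a| * |b|) := by
    rw [← sq_abs, sq]
    gcongr
  calc |G (a + b) - G a - G b| ≤ |G (a + b) - G a| + |G b| := abs_sub _ _
    _ ≤ L * (|a| + |b|) * |b| + L * b ^ 2 :=
      add_le_add (abs_apply_add_sub_le hG hL hg hab)
        (abs_apply_le_mul_sq hG hG₀ hL hg (by linarith [abs_nonneg a]))
    _ = L * (|a| * |b|) + 2 * (L * b ^ 2) := by rw [← sq_abs b]; ring
    _ ≤ 3 * L * |a * b| := by rw [abs_mul]; linarith

end Primitive

/-- The nonlinearities of the Nehari method without the Ambrosetti–Rabinowitz condition: `f` is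
continuous with primitive `F`, `f x t = o(t)` at `0`, `t ↦ f x t / |t|` is strictly increasing on
both half-lines and `F` is superquadratic, uniformly in the site `x`. The linear bound is only local
because every element of `ℓ²` is bounded. -/
structure NehariNonlinearity {X : Type*} (f F : X → ℝ → ℝ) : Prop where
  continuous : ∀ x, Continuous (f x)
  eq_integral : ∀ x t, F x t = ∫ s in (0 : ℝ)..t, f x s
  exists_abs_le : ∀ M, ∃ L ≥ 0, ∀ x t, |t| ≤ M → |f x t| ≤ L * |t|
  small : ∀ ε > 0, ∃ δ > 0, ∀ x t, |t| < δ → |f x t| ≤ ε * |t|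
  strictMonoOn_div_abs : ∀ x, StrictMonoOn (fun t => f x t / |t|) (Iio 0) ∧
    StrictMonoOn (fun t => f x t / |t|) (Ioi 0)
  superquadratic : ∀ M, ∃ R > 0, ∀ x t, R ≤ |t| → M ≤ F x t / t ^ 2

namespace NehariNonlinearity

variable {X : Type*} {f F : X → ℝ → ℝ}

theorem apply_zero (hf : NehariNonlinearity f F) (x : X) : f x 0 = 0 := by
  obtain ⟨L, -, hL⟩ := hf.exists_abs_le 0
  simpa using hL x 0

theorem primitive_zero (hf : NehariNonlinearity f F) (x : X) : F x 0 = 0 := by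
  simp [hf.eq_integral]

theorem hasDerivAt (hf : NehariNonlinearity f F) (x : X) (t : ℝ) : HasDerivAt (F x) (f x t) t := by
  rw [funext (hf.eq_integral x)]
  exact intervalIntegral.integral_hasDerivAt_right ((hf.continuous x).intervalIntegrable _ _)
    ((hf.continuous x).stronglyMeasurableAtFilter _ _) (hf.continuous x).continuousAt

theorem strictMonoOn_apply_mul (hf : NehariNonlinearity f F) (x : X) {v : ℝ} (hv : v ≠ 0) :
    StrictMonoOn (fun t => f x (t * v) * v / t) (Ioi 0) := by
  intro s (hs : 0 < s) t (ht : 0 < t) hst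
  have : 0 < v ^ 2 := by positivity
  rcases hv.lt_or_gt with hv | hv
  · have key := (hf.strictMonoOn_div_abs x).1 (mul_neg_of_pos_of_neg ht hv)
      (mul_neg_of_pos_of_neg hs hv) (mul_lt_mul_of_neg_right hst hv)
    simp only [abs_mul, abs_of_pos hs, abs_of_pos ht, abs_of_neg hv] at key
    calc f x (s * v) * v / s = -(v ^ 2 * (f x (s * v) / (s * -v))) := by field_simp
      _ < -(v ^ 2 * (f x (t * v) / (t * -v))) := by gcongr
      _ = f x (t * v) * v / t := by field_simp
  · have key := (hf.strictMonoOn_div_abs x).2 (mul_pos hs hv) (mul_pos ht hv)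
      (mul_lt_mul_of_pos_right hst hv)
    simp only [abs_mul, abs_of_pos hs, abs_of_pos ht, abs_of_pos hv] at key
    calc f x (s * v) * v / s = v ^ 2 * (f x (s * v) / (s * v)) := by field_simp
      _ < v ^ 2 * (f x (t * v) / (t * v)) := by gcongr
      _ = f x (t * v) * v / t := by field_simp

theorem apply_mul_self_nonneg (hf : NehariNonlinearity f F) (x : X) (v : ℝ) :
    0 ≤ f x v * v := by
  rcases eq_or_ne v 0 with rfl | hv
  · simp
  have hlim : Tendsto (fun ε : ℝ => -(ε * v ^ 2)) (𝓝[>] 0) (𝓝 0) := by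
    have : Continuous fun ε : ℝ => -(ε * v ^ 2) := by fun_prop
    simpa using (this.tendsto 0).mono_left nhdsWithin_le_nhds
  refine le_of_tendsto hlim (eventually_mem_nhdsWithin.mono fun ε hε => ?_)
  obtain ⟨δ, hδ, hsmall⟩ := hf.small ε hε
  obtain ⟨s, hs, hs'⟩ := exists_between (lt_min one_pos (div_pos hδ (abs_pos.2 hv)))
  have hsv : |s * v| < δ := by
    rw [abs_mul, abs_of_pos hs]
    exact (lt_div_iff₀ (abs_pos.2 hv)).1 (hs'.trans_le (min_le_right _ _))
  calc -(ε * v ^ 2) ≤ f x (s * v) * v / s := by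
        have habs : |f x (s * v) * v| ≤ ε * v ^ 2 * s := calc
          |f x (s * v) * v| ≤ ε * |s * v| * |v| := by
            rw [abs_mul]
            gcongr
            exact hsmall x _ hsv
          _ = ε * v ^ 2 * s := by rw [abs_mul, abs_of_pos hs, ← sq_abs v]; ring
        rw [le_div_iff₀ hs]
        linarith [neg_abs_le (f x (s * v) * v)]
    _ ≤ f x (1 * v) * v / 1 := (hf.strictMonoOn_apply_mul x hv).monotoneOn hs
        (mem_Ioi.2 one_pos) (hs'.le.trans (min_le_left _ _))
    _ = f x v * v := by simp

theorem primitive_nonneg (hf : NehariNonlinearity f F) (x : X) (t : ℝ) : 0 ≤ F x t := by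
  obtain ⟨θ, ⟨hθ, -⟩, h⟩ := exists_apply_add_sub_eq_mul (hf.hasDerivAt x) 0 t
  simp only [zero_add, hf.primitive_zero, sub_zero] at h
  rw [h]
  rcases hθ.eq_or_lt with rfl | hθ
  · simp [hf.apply_zero]
  · refine nonneg_of_mul_nonneg_right ?_ hθ
    simpa [mul_left_comm] using hf.apply_mul_self_nonneg x (θ * t)

theorem exists_mul_sq_le_primitive (hf : NehariNonlinearity f F) (M : ℝ) :
    ∃ R > 0, ∀ x t, R ≤ |t| → M * t ^ 2 ≤ F x t := by
  obtain ⟨R, hR, h⟩ := hf.superquadratic M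
  refine ⟨R, hR, fun x t ht => (le_div_iff₀ ?_).1 (h x t ht)⟩
  exact sq_pos_of_ne_zero (abs_pos.1 (hR.trans_le ht))

theorem exists_abs_primitive_le (hf : NehariNonlinearity f F) {ε : ℝ} (hε : 0 < ε) :
    ∃ δ > 0, ∀ x t, |t| ≤ δ → |f x t| ≤ ε * |t| ∧ |F x t| ≤ ε * t ^ 2 := by
  obtain ⟨δ, hδ, h⟩ := hf.small ε hε
  have hle (x : X) (t : ℝ) (ht : |t| ≤ δ / 2) : |f x t| ≤ ε * |t| :=
    h x t (ht.trans_lt (half_lt_self hδ))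
  exact ⟨δ / 2, half_pos hδ, fun x t ht => ⟨hle x t ht,
    abs_apply_le_mul_sq (hf.hasDerivAt x) (hf.primitive_zero x) hε.le (hle x) ht⟩⟩

end NehariNonlinearity

/-! ### Convergence in `ℓ²` -/

section Tannery

variable {X ι : Type*} {l : Filter ι}

/-- Tannery's theorem, applied to the part of `a i` that exceeds `c i`. -/
theorem eventually_tsum_le_add {a c : ι → X → ℝ} {β : X → ℝ} (hβ : Summable β)
    (hβ₀ : ∀ x, 0 ≤ β x) (ha₀ : ∀ i x, 0 ≤ a i x) (ha : ∀ x, Tendsto (fun i => a i x) l (𝓝 0))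
    (hc₀ : ∀ i x, 0 ≤ c i x) (hc : ∀ i, Summable (c i))
    (hle : ∀ᶠ i in l, ∀ x, a i x ≤ β x + c i x) {ε : ℝ} (hε : 0 < ε) :
    ∀ᶠ i in l, ∑' x, a i x ≤ ε + ∑' x, c i x := by
  let g : ι → X → ℝ := fun i x => max (a i x - c i x) 0
  have hg_le : ∀ᶠ i in l, ∀ x, ‖g i x‖ ≤ β x := by
    filter_upwards [hle] with i hi x
    rw [Real.norm_of_nonneg (le_max_right _ _)]
    exact max_le (sub_le_iff_le_add.2 (hi x)) (hβ₀ x)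
  have hg : Tendsto (fun i => ∑' x, g i x) l (𝓝 0) := by
    rw [← tsum_zero (α := ℝ) (β := X)]
    refine tendsto_tsum_of_dominated_convergence hβ (fun x => ?_) hg_le
    exact squeeze_zero (fun i => le_max_right _ _)
      (fun i => max_le (sub_le_self _ (hc₀ i x)) (ha₀ i x)) (ha x)
  filter_upwards [hle, hg_le, hg.eventually_lt_const hε] with i hi hgi hgε
  have hg_sum : Summable (g i) := .of_norm_bounded hβ hgi
  have ha_sum : Summable (a i) := .of_nonneg_of_le (ha₀ i) hi (hβ.add (hc i))
  calc ∑' x, a i x ≤ ∑' x, (g i x + c i x) :=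
        ha_sum.tsum_le_tsum (fun x => sub_le_iff_le_add.1 (le_max_left _ _)) (hg_sum.add (hc i))
    _ = ∑' x, g i x + ∑' x, c i x := hg_sum.tsum_add (hc i)
    _ ≤ ε + ∑' x, c i x := by gcongr

theorem abs_mul_le_add_mul_sq {η : ℝ} (hη : 0 < η) (z w : ℝ) :
    |z * w| ≤ 1 / (4 * η) * z ^ 2 + η * w ^ 2 := by
  have h : 0 ≤ (|z| - 2 * η * |w|) ^ 2 / (4 * η) := by positivity
  have heq : (|z| - 2 * η * |w|) ^ 2 / (4 * η) =
      1 / (4 * η) * |z| ^ 2 + η * |w| ^ 2 - |z| * |w| := by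
    field_simp
    ring
  rw [abs_mul, ← sq_abs z, ← sq_abs w]
  linarith

end Tannery

namespace H1

variable {X ι : Type*} {l : Filter ι}

theorem hasSum_mul (u v : H1 X) : HasSum (fun x => u x * v x) (inner ℝ u v) := by
  simpa [mul_comm] using lp.hasSum_inner (𝕜 := ℝ) u v

theorem hasSum_sq (u : H1 X) : HasSum (fun x => u x ^ 2) (‖u‖ ^ 2) := by
  simpa [sq, real_inner_self_eq_norm_sq] using hasSum_mul u u

theorem abs_apply_le_norm (u : H1 X) (x : X) : |u x| ≤ ‖u‖ :=
  lp.norm_apply_le_norm two_ne_zero u x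

theorem abs_smul_apply {t : ℝ} (ht : 0 ≤ t) (u : H1 X) (x : X) : |(t • u) x| = t * |u x| := by
  rw [lp.coeFn_smul, Pi.smul_apply, smul_eq_mul, abs_mul, abs_of_nonneg ht]

theorem continuous_apply (x : X) : Continuous fun u : H1 X => u x :=
  (lp.evalCLM ℝ (fun _ : X => ℝ) 2 x).continuous

theorem memℓp_of_abs_le {v : X → ℝ} (u : H1 X) (h : ∀ x, |v x| ≤ |u x|) : Memℓp v 2 :=
  (lp.memℓp u).mono' h

theorem exists_apply_ne_zero {u : H1 X} (hu : u ≠ 0) : ∃ x, u x ≠ 0 := by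
  contrapose! hu
  exact lp.ext (funext hu)

theorem tendsto_of_dominated {b v : ι → H1 X} {b₀ v₀ : H1 X} (hb : Tendsto b l (𝓝 b₀))
    (hv : ∀ x, Tendsto (fun i => v i x) l (𝓝 (v₀ x))) (hvb : ∀ᶠ i in l, ∀ x, |v i x| ≤ |b i x|) :
    Tendsto v l (𝓝 v₀) := by
  have hle : ∀ᶠ i in l, ∀ x,
      (v i x - v₀ x) ^ 2 ≤ 4 * b₀ x ^ 2 + 2 * v₀ x ^ 2 + 4 * (b i x - b₀ x) ^ 2 := by
    filter_upwards [hvb] with i hi x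
    have hsq := sq_le_sq.2 (hi x)
    linarith [sq_nonneg (v i x + v₀ x), sq_nonneg (b i x - 2 * b₀ x)]
  have hlim (x : X) : Tendsto (fun i => (v i x - v₀ x) ^ 2) l (𝓝 0) := by
    simpa using ((hv x).sub_const (v₀ x)).pow 2
  have hsq : Tendsto (fun i => ‖v i - v₀‖ ^ 2) l (𝓝 0) := by
    refine tendsto_order.2 ⟨fun ε hε => .of_forall fun i => hε.trans_le (sq_nonneg _),
      fun ε hε => ?_⟩
    have hb_small : ∀ᶠ i in l, 4 * ‖b i - b₀‖ ^ 2 < ε / 2 :=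
      ((((tendsto_iff_norm_sub_tendsto_zero.1 hb).pow 2).const_mul 4).eventually_lt_const
        (by simpa using half_pos hε))
    filter_upwards [hb_small, eventually_tsum_le_add
      (((hasSum_sq b₀).mul_left 4).add ((hasSum_sq v₀).mul_left 2)).summable
      (fun x => by positivity) (fun i x => sq_nonneg _) hlim (fun i x => by positivity)
      (fun i => ((hasSum_sq (b i - b₀)).mul_left 4).summable) hle (half_pos hε)] with i hbi hi
    have hv_sum : ∑' x, (v i x - v₀ x) ^ 2 = ‖v i - v₀‖ ^ 2 := (hasSum_sq (v i - v₀)).tsum_eq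
    rw [hv_sum, ((hasSum_sq (b i - b₀)).mul_left 4).tsum_eq] at hi
    linarith
  rw [tendsto_iff_norm_sub_tendsto_zero]
  simpa using hsq.sqrt

theorem tendsto_tsum_abs_mul (z : H1 X) {w : ι → H1 X} {C : ℝ} (hC : ∀ i, ‖w i‖ ≤ C)
    (hw : ∀ x, Tendsto (fun i => w i x) l (𝓝 0)) :
    Tendsto (fun i => ∑' x, |z x * w i x|) l (𝓝 0) := by
  refine tendsto_order.2 ⟨fun ε hε => .of_forall fun i =>
    hε.trans_le (tsum_nonneg fun x => abs_nonneg _), fun ε hε => ?_⟩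
  obtain ⟨η, hη, hηC⟩ : ∃ η > 0, C ^ 2 * η < ε / 2 := exists_pos_mul_lt (half_pos hε) _
  have hlim (x : X) : Tendsto (fun i => |z x * w i x|) l (𝓝 0) := by
    simpa using ((hw x).const_mul (z x)).abs
  filter_upwards [eventually_tsum_le_add ((hasSum_sq z).mul_left (1 / (4 * η))).summable
    (fun x => by positivity) (fun i x => abs_nonneg _) hlim (fun i x => by positivity)
    (fun i => ((hasSum_sq (w i)).mul_left η).summable)
    (.of_forall fun i x => abs_mul_le_add_mul_sq hη _ _) (half_pos hε)] with i hi
  rw [((hasSum_sq (w i)).mul_left η).tsum_eq] at hi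
  have : η * ‖w i‖ ^ 2 ≤ C ^ 2 * η := by
    rw [mul_comm]
    gcongr
    exact hC i
  linarith

theorem exists_tendsto_apply (l : Ultrafilter ι) {u : ι → H1 X} {C : ℝ} (hC : ∀ i, ‖u i‖ ≤ C) :
    ∃ u₀ : H1 X, ∀ x, Tendsto (fun i => u i x) l (𝓝 (u₀ x)) := by
  have hmem (x : X) : ∃ a, Tendsto (fun i => u i x) l (𝓝 a) := by
    obtain ⟨a, -, ha⟩ := (isCompact_Icc (a := -C) (b := C)).ultrafilter_le_nhds
      (l.map fun i => u i x)
      (le_principal_iff.2 <| Ultrafilter.mem_coe.2 <| Ultrafilter.mem_map.2 <| univ_mem' fun i =>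
        abs_le.1 ((abs_apply_le_norm _ x).trans (hC i)))
    exact ⟨a, ha⟩
  choose u₀ hu₀ using hmem
  have hbdd : Bornology.IsBounded (range u) :=
    isBounded_iff_forall_norm_le.2 ⟨C, forall_mem_range.2 hC⟩
  exact ⟨⟨u₀, lp.memℓp_of_tendsto hbdd (tendsto_pi_nhds.2 hu₀)⟩, hu₀⟩

end H1

/-! ### The energy functional -/

section Energy

variable {X : Type*} {f F : X → ℝ → ℝ}

namespace NehariNonlinearity

theorem memℓp_comp (hf : NehariNonlinearity f F) (u : H1 X) : Memℓp (fun x => f x (u x)) 2 := by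
  obtain ⟨L, hL₀, hL⟩ := hf.exists_abs_le ‖u‖
  refine H1.memℓp_of_abs_le (L • u) fun x => (hL x _ (H1.abs_apply_le_norm u x)).trans_eq ?_
  simp [abs_mul, abs_of_nonneg hL₀]

/-- The Nemytskii operator `u ↦ f(·, u)` on `ℓ²`. -/
def nemytskii (hf : NehariNonlinearity f F) (u : H1 X) : H1 X :=
  ⟨fun x => f x (u x), hf.memℓp_comp u⟩

@[simp]
theorem nemytskii_apply (hf : NehariNonlinearity f F) (u : H1 X) (x : X) :
    hf.nemytskii u x = f x (u x) :=
  rfl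

theorem continuous_nemytskii (hf : NehariNonlinearity f F) : Continuous hf.nemytskii := by
  refine continuous_iff_continuousAt.2 fun u₀ => ?_
  obtain ⟨L, hL₀, hL⟩ := hf.exists_abs_le (‖u₀‖ + 1)
  refine H1.tendsto_of_dominated (b := fun u => L • u) (continuous_const_smul L).continuousAt
    (fun x => ((hf.continuous x).comp (H1.continuous_apply x)).continuousAt) ?_
  filter_upwards [continuous_norm.continuousAt.eventually_lt_const (lt_add_one ‖u₀‖)] with u hu x
  simpa [abs_mul, abs_of_nonneg hL₀] using hL x _ ((H1.abs_apply_le_norm u x).trans hu.le)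

theorem summable_primitive (hf : NehariNonlinearity f F) (u : H1 X) :
    Summable fun x => F x (u x) := by
  obtain ⟨L, hL₀, hL⟩ := hf.exists_abs_le ‖u‖
  exact .of_norm_bounded ((H1.hasSum_sq u).summable.mul_left L) fun x =>
    abs_apply_le_mul_sq (hf.hasDerivAt x) (hf.primitive_zero x) hL₀ (hL x)
      (H1.abs_apply_le_norm u x)

/-- Mean value theorem, applied site by site: the intermediate points `u x + θ x * v x` form an
element `u + w` of `ℓ²` with `‖w‖ ≤ ‖v‖`. -/
theorem exists_tsum_primitive_sub_eq (hf : NehariNonlinearity f F) (u v : H1 X) :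
    ∃ w : H1 X, ‖w‖ ≤ ‖v‖ ∧
      ∑' x, F x ((u + v) x) - ∑' x, F x (u x) = inner ℝ (hf.nemytskii (u + w)) v := by
  choose θ hθ h using fun x => exists_apply_add_sub_eq_mul (hf.hasDerivAt x) (u x) (v x)
  have hle (x : X) : |θ x * v x| ≤ |v x| := by
    rw [abs_mul, abs_of_nonneg (hθ x).1]
    exact mul_le_of_le_one_left (abs_nonneg _) (hθ x).2
  refine ⟨⟨fun x => θ x * v x, H1.memℓp_of_abs_le v hle⟩, lp.norm_mono two_ne_zero hle, ?_⟩
  rw [← (hf.summable_primitive (u + v)).tsum_sub (hf.summable_primitive u),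
    ← (H1.hasSum_mul _ v).tsum_eq]
  exact tsum_congr h

theorem hasFDerivAt_tsum_primitive (hf : NehariNonlinearity f F) (u : H1 X) :
    HasFDerivAt (fun u : H1 X => ∑' x, F x (u x)) (innerSL ℝ (hf.nemytskii u)) u := by
  rw [hasFDerivAt_iff_isLittleO_nhds_zero, Asymptotics.isLittleO_iff]
  intro ε hε
  obtain ⟨δ, hδ, hball⟩ := Metric.continuousAt_iff.1 hf.continuous_nemytskii.continuousAt ε hε
  filter_upwards [Metric.ball_mem_nhds 0 hδ] with v hv
  obtain ⟨w, hwv, hw⟩ := hf.exists_tsum_primitive_sub_eq u v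
  have hclose : ‖hf.nemytskii (u + w) - hf.nemytskii u‖ ≤ ε := by
    rw [← dist_eq_norm]
    exact (hball (by simpa using hwv.trans_lt (mem_ball_zero_iff.1 hv))).le
  rw [hw, innerSL_apply_apply, ← inner_sub_left]
  exact (norm_inner_le_norm _ _).trans (by gcongr)

end NehariNonlinearity

/-- The energy functional of the equation `A u = f(·, u)` in `ℓ²`, where `A` is symmetric and `F` is
the primitive of `f`. Its critical points are the solutions. -/
def energy (A : H1 X →L[ℝ] H1 X) (F : X → ℝ → ℝ) (u : H1 X) : ℝ :=
  (1 / 2) * inner ℝ (A u) u - ∑' x, F x (u x)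

variable {A : H1 X →L[ℝ] H1 X} {c : ℝ}

theorem energy_zero (hf : NehariNonlinearity f F) : energy A F 0 = 0 := by
  simp [energy, hf.primitive_zero]

theorem hasFDerivAt_energy (hf : NehariNonlinearity f F)
    (hA : (A : H1 X →ₗ[ℝ] H1 X).IsSymmetric) (u : H1 X) :
    HasFDerivAt (energy A F) (innerSL ℝ (A u - hf.nemytskii u)) u := by
  have hquad := ((A.hasFDerivAt (x := u)).inner ℝ (hasFDerivAt_id u)).const_mul (1 / 2)
  refine (hquad.sub (hf.hasFDerivAt_tsum_primitive u)).congr_fderiv ?_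
  ext v
  have hsymm : inner ℝ (A v) u = inner ℝ (A u) v := (hA v u).trans (real_inner_comm _ _)
  simp [fderivInnerCLM_apply, hsymm]
  ring

theorem contDiff_energy (hf : NehariNonlinearity f F)
    (hA : (A : H1 X →ₗ[ℝ] H1 X).IsSymmetric) : ContDiff ℝ 1 (energy A F) :=
  contDiff_one_iff_hasFDerivAt.2 ⟨_, (innerSL ℝ).continuous.comp
    (A.continuous.sub hf.continuous_nemytskii), hasFDerivAt_energy hf hA⟩

theorem fderiv_energy_apply (hf : NehariNonlinearity f F)
    (hA : (A : H1 X →ₗ[ℝ] H1 X).IsSymmetric) (u v : H1 X) :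
    fderiv ℝ (energy A F) u v = inner ℝ (A u) v - inner ℝ (hf.nemytskii u) v := by
  rw [(hasFDerivAt_energy hf hA u).fderiv, innerSL_apply_apply, inner_sub_left]

theorem strictFibering_energy (hf : NehariNonlinearity f F)
    (hA : (A : H1 X →ₗ[ℝ] H1 X).IsSymmetric) : StrictFibering (energy A F) := by
  intro u hu s (hs : 0 < s) t (ht : 0 < t) hst
  obtain ⟨x₀, hx₀⟩ := H1.exists_apply_ne_zero hu
  have hlt (x : X) (hx : u x ≠ 0) :
      f x (s * u x) * u x / s < f x (t * u x) * u x / t :=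
    hf.strictMonoOn_apply_mul x hx hs ht hst
  have key : inner ℝ (hf.nemytskii (s • u)) u / s < inner ℝ (hf.nemytskii (t • u)) u / t := by
    refine hasSum_lt (fun x => ?_) (hlt x₀ hx₀) ((H1.hasSum_mul _ u).div_const s)
      ((H1.hasSum_mul _ u).div_const t)
    rcases eq_or_ne (u x) 0 with hx | hx
    · simp [hx]
    · exact (hlt x hx).le
  have hquot {r : ℝ} (hr : 0 < r) : fderiv ℝ (energy A F) (r • u) u / r =
      inner ℝ (A u) u - inner ℝ (hf.nemytskii (r • u)) u / r := by
    rw [fderiv_energy_apply hf hA, map_smul, real_inner_smul_left]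
    field_simp
  simpa only [hquot hs, hquot ht] using sub_lt_sub_left key _

theorem exists_le_energy_of_abs_le (hf : NehariNonlinearity f F)
    (hA : (A : H1 X →ₗ[ℝ] H1 X).IsSymmetric) (hc : 0 < c)
    (hcoer : ∀ u, c * ‖u‖ ^ 2 ≤ inner ℝ (A u) u) :
    ∃ δ > 0, ∀ u : H1 X, (∀ x, |u x| ≤ δ) →
      c / 4 * ‖u‖ ^ 2 ≤ energy A F u ∧ c / 4 * ‖u‖ ^ 2 ≤ fderiv ℝ (energy A F) u u := by
  have hc₄ : 0 < c / 4 := by positivity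
  obtain ⟨δ, hδ, hsmall⟩ := hf.exists_abs_primitive_le hc₄
  refine ⟨δ, hδ, fun u hu => ?_⟩
  have hsq := (H1.hasSum_sq u).mul_left (c / 4)
  have hF : ∑' x, F x (u x) ≤ c / 4 * ‖u‖ ^ 2 := hasSum_le
    (fun x => (le_abs_self _).trans (hsmall x _ (hu x)).2) (hf.summable_primitive u).hasSum hsq
  have hN : inner ℝ (hf.nemytskii u) u ≤ c / 4 * ‖u‖ ^ 2 := by
    refine hasSum_le (fun x => (le_abs_self _).trans ?_) (H1.hasSum_mul _ u) hsq
    rw [abs_mul, ← sq_abs (u x), sq, ← mul_assoc]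
    exact mul_le_mul_of_nonneg_right (hsmall x _ (hu x)).1 (abs_nonneg _)
  have hcoer_u := hcoer u
  have hpos : 0 ≤ c * ‖u‖ ^ 2 := by positivity
  rw [fderiv_energy_apply hf hA, energy]
  constructor <;> linarith

theorem exists_energy_neg_of_concentrated (hf : NehariNonlinearity f F) (A : H1 X →L[ℝ] H1 X)
    {κ : ℝ} (hκ : 0 < κ) :
    ∃ R > 0, ∀ (u : H1 X) (x : X), u ≠ 0 → κ * ‖u‖ ≤ |u x| → R ≤ |u x| → energy A F u < 0 := by
  obtain ⟨R, hR, hF⟩ := hf.exists_mul_sq_le_primitive ((‖A‖ / 2 + 1) / κ ^ 2)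
  refine ⟨R, hR, fun u x hu hκu hRu => ?_⟩
  have hquad : inner ℝ (A u) u ≤ ‖A‖ * ‖u‖ ^ 2 := calc
    inner ℝ (A u) u ≤ ‖A u‖ * ‖u‖ := real_inner_le_norm _ _
    _ ≤ ‖A‖ * ‖u‖ * ‖u‖ := by gcongr; exact A.le_opNorm u
    _ = ‖A‖ * ‖u‖ ^ 2 := by ring
  have hsum : (‖A‖ / 2 + 1) * ‖u‖ ^ 2 ≤ ∑' x, F x (u x) := calc
    (‖A‖ / 2 + 1) * ‖u‖ ^ 2 = (‖A‖ / 2 + 1) / κ ^ 2 * (κ * ‖u‖) ^ 2 := by field_simp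
    _ ≤ (‖A‖ / 2 + 1) / κ ^ 2 * |u x| ^ 2 := by gcongr
    _ ≤ F x (u x) := by rw [sq_abs]; exact hF x _ hRu
    _ ≤ ∑' x, F x (u x) := (hf.summable_primitive u).le_tsum x fun y _ => hf.primitive_nonneg y _
  have hpos : 0 < ‖u‖ ^ 2 := by positivity
  rw [energy]
  linarith

theorem exists_smul_mem_nehariSet_energy (hf : NehariNonlinearity f F)
    (hA : (A : H1 X →ₗ[ℝ] H1 X).IsSymmetric) (hc : 0 < c)
    (hcoer : ∀ u, c * ‖u‖ ^ 2 ≤ inner ℝ (A u) u) {u : H1 X} (hu : u ≠ 0) :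
    ∃ t : ℝ, 0 < t ∧ t • u ∈ nehariSet (energy A F) := by
  have hu₀ : 0 < ‖u‖ := norm_pos_iff.2 hu
  obtain ⟨x, hx⟩ := H1.exists_apply_ne_zero hu
  have hx₀ : 0 < |u x| := abs_pos.2 hx
  obtain ⟨δ, hδ, hsmall⟩ := exists_le_energy_of_abs_le hf hA hc hcoer
  obtain ⟨R, hR, hlarge⟩ := exists_energy_neg_of_concentrated hf A (div_pos hx₀ hu₀)
  have hδu : 0 < δ / ‖u‖ := div_pos hδ hu₀
  have hRu : 0 < R / |u x| := div_pos hR hx₀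
  refine exists_smul_mem_nehariSet (contDiff_energy hf hA) hu hδu ?_ hRu ?_
  · have hnorm : ‖(δ / ‖u‖) • u‖ = δ := by
      rw [norm_smul_of_nonneg hδu.le, div_mul_cancel₀ _ hu₀.ne']
    have := (hsmall _ fun y => (H1.abs_apply_le_norm _ y).trans hnorm.le).2
    rw [map_smul, smul_eq_mul] at this
    exact nonneg_of_mul_nonneg_right ((by positivity : (0 : ℝ) ≤ _).trans this) hδu
  · have habs : |((R / |u x|) • u) x| = R := by
      rw [H1.abs_smul_apply hRu.le, div_mul_cancel₀ _ hx₀.ne']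
    rw [energy_zero hf]
    refine (hlarge _ x (smul_ne_zero hRu.ne' hu) ?_ habs.ge).le
    rw [habs, norm_smul_of_nonneg hRu.le]
    exact le_of_eq (by field_simp)

theorem exists_le_abs_apply_of_mem_nehariSet (hf : NehariNonlinearity f F)
    (hA : (A : H1 X →ₗ[ℝ] H1 X).IsSymmetric) (hc : 0 < c)
    (hcoer : ∀ u, c * ‖u‖ ^ 2 ≤ inner ℝ (A u) u) :
    ∃ δ > 0, ∀ u ∈ nehariSet (energy A F), ∃ x, δ ≤ |u x| := by
  obtain ⟨δ, hδ, hsmall⟩ := exists_le_energy_of_abs_le hf hA hc hcoer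
  refine ⟨δ, hδ, fun u hu => ?_⟩
  by_contra! hlt
  have hpos : 0 < c / 4 * ‖u‖ ^ 2 := by have := norm_pos_iff.2 hu.1; positivity
  exact (hpos.trans_le (hsmall u fun x => (hlt x).le).2).ne' hu.2

theorem energy_pos_of_mem_nehariSet (hf : NehariNonlinearity f F)
    (hA : (A : H1 X →ₗ[ℝ] H1 X).IsSymmetric) {u : H1 X} (hu : u ∈ nehariSet (energy A F)) :
    0 < energy A F u := by
  have := (strictFibering_energy hf hA).strictMonoOn_apply_smul
    ((contDiff_energy hf hA).differentiable one_ne_zero) hu (left_mem_Icc.2 zero_le_one)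
    (right_mem_Icc.2 zero_le_one) one_pos
  simpa [energy_zero hf] using this

/-- Rescale `u` to a fixed norm `s`. If it is pointwise small, its energy exceeds `B`, and so does
that of `u`, the maximum on the ray; otherwise `u` is concentrated and `F` makes its energy negative
as soon as `u` is large. -/
theorem exists_norm_le_of_mem_nehariSet (hf : NehariNonlinearity f F)
    (hA : (A : H1 X →ₗ[ℝ] H1 X).IsSymmetric) (hc : 0 < c)
    (hcoer : ∀ u, c * ‖u‖ ^ 2 ≤ inner ℝ (A u) u) (B : ℝ) :
    ∃ C, ∀ u ∈ nehariSet (energy A F), energy A F u ≤ B → ‖u‖ ≤ C := by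
  obtain ⟨δ, hδ, hsmall⟩ := exists_le_energy_of_abs_le hf hA hc hcoer
  obtain ⟨s, hs, hsB⟩ : ∃ s > 0, B < c / 4 * s ^ 2 := by
    have : Tendsto (fun s : ℝ => c / 4 * s ^ 2) atTop atTop :=
      (tendsto_pow_atTop two_ne_zero).const_mul_atTop (by positivity)
    exact ((eventually_gt_atTop 0).and (this.eventually_gt_atTop B)).exists
  obtain ⟨R, -, hlarge⟩ := exists_energy_neg_of_concentrated hf A (div_pos hδ hs)
  refine ⟨R / (δ / s), fun u hu huB => ?_⟩
  have hu₀ : 0 < ‖u‖ := norm_pos_iff.2 hu.1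
  by_contra! hlt
  obtain ⟨x, hx⟩ : ∃ x, δ / s * ‖u‖ ≤ |u x| := by
    by_contra! hspread
    have hsu : 0 < s / ‖u‖ := div_pos hs hu₀
    have hnorm : ‖(s / ‖u‖) • u‖ = s := by
      rw [norm_smul_of_nonneg hsu.le, div_mul_cancel₀ _ hu₀.ne']
    have hlow := (hsmall ((s / ‖u‖) • u) fun x => ?_).1
    · have hmax := (strictFibering_energy hf hA).apply_smul_le
        ((contDiff_energy hf hA).differentiable one_ne_zero) hu hsu.le
      rw [hnorm] at hlow
      linarith
    · calc |((s / ‖u‖) • u) x| = s / ‖u‖ * |u x| := H1.abs_smul_apply hsu.le u x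
        _ ≤ s / ‖u‖ * (δ / s * ‖u‖) := by gcongr; exact (hspread x).le
        _ = δ := by field_simp
  have hRx : R ≤ |u x| := by
    rw [div_lt_iff₀' (div_pos hδ hs)] at hlt
    exact hlt.le.trans hx
  exact (energy_pos_of_mem_nehariSet hf hA hu).not_gt (hlarge u x hu.1 hx hRx)

theorem abs_energy_add_sub_sub_le (hf : NehariNonlinearity f F)
    (hA : (A : H1 X →ₗ[ℝ] H1 X).IsSymmetric) {L M : ℝ} (hL₀ : 0 ≤ L)
    (hL : ∀ x t, |t| ≤ M → |f x t| ≤ L * |t|) {u w : H1 X} (hM : ‖u‖ + ‖w‖ ≤ M) :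
    |energy A F (u + w) - energy A F u - energy A F w| ≤
      ∑' x, |A u x * w x| + 3 * L * ∑' x, |u x * w x| := by
  have hF_le (x : X) : ‖F x ((u + w) x) - F x (u x) - F x (w x)‖ ≤ 3 * L * |u x * w x| :=
    abs_apply_add_sub_sub_le (hf.hasDerivAt x) (hf.primitive_zero x) hL₀ (hL x)
      ((add_le_add (H1.abs_apply_le_norm u x) (H1.abs_apply_le_norm w x)).trans hM)
  have hF_sum : ‖∑' x, (F x ((u + w) x) - F x (u x) - F x (w x))‖ ≤
      3 * L * ∑' x, |u x * w x| :=
    tsum_of_norm_bounded ((H1.hasSum_mul u w).summable.abs.hasSum.mul_left _) hF_le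
  have hinner : |inner ℝ (A u) w| ≤ ∑' x, |A u x * w x| := by
    rw [← (H1.hasSum_mul (A u) w).tsum_eq]
    exact norm_tsum_le_tsum_norm (H1.hasSum_mul (A u) w).summable.norm
  have hsymm : inner ℝ (A w) u = inner ℝ (A u) w := (hA w u).trans (real_inner_comm _ _)
  have hsplit : energy A F (u + w) - energy A F u - energy A F w =
      inner ℝ (A u) w - ∑' x, (F x ((u + w) x) - F x (u x) - F x (w x)) := by
    rw [((hf.summable_primitive _).sub (hf.summable_primitive u)).tsum_sub
      (hf.summable_primitive w), (hf.summable_primitive _).tsum_sub (hf.summable_primitive u)]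
    simp only [energy, map_add, inner_add_left, inner_add_right, hsymm]
    ring
  rw [hsplit]
  exact (abs_sub _ _).trans (add_le_add hinner hF_sum)

theorem exists_tendsto_zero_energy_add_le (hf : NehariNonlinearity f F)
    (hA : (A : H1 X →ₗ[ℝ] H1 X).IsSymmetric) {ι : Type*} {l : Filter ι} (u : H1 X)
    {w : ι → H1 X} {C : ℝ} (hC : ∀ i, ‖w i‖ ≤ C) (hw : ∀ x, Tendsto (fun i => w i x) l (𝓝 0))
    (t₀ : ℝ) :
    ∃ D : ι → ℝ, Tendsto D l (𝓝 0) ∧ ∀ i, ∀ t ∈ Icc 0 t₀,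
      energy A F (t • u) + energy A F (t • w i) ≤ energy A F (t • (u + w i)) + D i := by
  obtain ⟨L, hL₀, hL⟩ := hf.exists_abs_le (t₀ * (‖u‖ + C))
  refine ⟨fun i => t₀ ^ 2 * (∑' x, |A u x * w i x| + 3 * L * ∑' x, |u x * w i x|), ?_,
    fun i t ht => ?_⟩
  · simpa using ((H1.tendsto_tsum_abs_mul (A u) hC hw).add
      ((H1.tendsto_tsum_abs_mul u hC hw).const_mul (3 * L))).const_mul (t₀ ^ 2)
  have hscale (z : H1 X) : ∑' x, |(t • z) x * (t • w i) x| = t ^ 2 * ∑' x, |z x * w i x| := by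
    rw [← tsum_mul_left]
    refine tsum_congr fun x => ?_
    rw [← abs_of_nonneg (sq_nonneg t), ← abs_mul]
    exact congrArg _ (by simp; ring)
  have hM : ‖t • u‖ + ‖t • w i‖ ≤ t₀ * (‖u‖ + C) := by
    rw [norm_smul_of_nonneg ht.1, norm_smul_of_nonneg ht.1, ← mul_add]
    gcongr
    exacts [ht.1.trans ht.2, ht.2, hC i]
  have hsplit := abs_energy_add_sub_sub_le hf hA hL₀ hL hM
  rw [map_smul, hscale, hscale, mul_left_comm (3 * L), ← mul_add, ← smul_add] at hsplit
  have hmono : t ^ 2 * (∑' x, |A u x * w i x| + 3 * L * ∑' x, |u x * w i x|) ≤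
      t₀ ^ 2 * (∑' x, |A u x * w i x| + 3 * L * ∑' x, |u x * w i x|) :=
    mul_le_mul_of_nonneg_right (pow_le_pow_left₀ ht.1 ht.2 2)
      (add_nonneg (tsum_nonneg fun _ => abs_nonneg _)
        (mul_nonneg (by positivity) (tsum_nonneg fun _ => abs_nonneg _)))
  linarith [neg_abs_le (energy A F (t • (u + w i)) - energy A F (t • u) - energy A F (t • w i))]

theorem exists_minimizing_seq (hf : NehariNonlinearity f F)
    (hA : (A : H1 X →ₗ[ℝ] H1 X).IsSymmetric) (hc : 0 < c)
    (hcoer : ∀ u, c * ‖u‖ ^ 2 ≤ inner ℝ (A u) u) [Nonempty X] {K : Finset X}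
    (hK : ∀ u ∈ nehariSet (energy A F), ∀ x, ∃ v ∈ nehariSet (energy A F),
      energy A F v = energy A F u ∧ ∃ y ∈ K, v y = u x) :
    ∃ u : ℕ → H1 X, (∀ n, u n ∈ nehariSet (energy A F)) ∧
      Tendsto (fun n => energy A F (u n)) atTop (𝓝 (sInf (energy A F '' nehariSet (energy A F)))) ∧
      ∃ δ > 0, ∀ n, δ ≤ ∑ y ∈ K, |u n y| := by
  classical
  obtain ⟨δ, hδ, hδN⟩ := exists_le_abs_apply_of_mem_nehariSet hf hA hc hcoer
  have hne : (energy A F '' nehariSet (energy A F)).Nonempty := by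
    have hu : lp.single 2 (Classical.arbitrary X) (1 : ℝ) ≠ (0 : H1 X) := fun h => by
      simpa using congrArg (fun v : H1 X => v (Classical.arbitrary X)) h
    obtain ⟨t, -, ht⟩ := exists_smul_mem_nehariSet_energy hf hA hc hcoer hu
    exact ⟨_, mem_image_of_mem _ ht⟩
  have hbdd : BddBelow (energy A F '' nehariSet (energy A F)) :=
    ⟨0, forall_mem_image.2 fun u hu => (energy_pos_of_mem_nehariSet hf hA hu).le⟩
  obtain ⟨r, -, hr, hrN⟩ := exists_seq_tendsto_sInf hne hbdd
  choose v hvN hvr using hrN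
  choose x hx using fun n => hδN (v n) (hvN n)
  choose u huN huv y hyK huy using fun n => hK (v n) (hvN n) (x n)
  refine ⟨u, huN, by simpa only [huv, hvr] using hr, δ, hδ, fun n => ?_⟩
  calc δ ≤ |u n (y n)| := by rw [huy]; exact hx n
    _ ≤ ∑ y ∈ K, |u n y| :=
      Finset.single_le_sum (f := fun y => |u n y|) (fun _ _ => abs_nonneg _) (hyK n)

/-- With `w i = u i - u₀`, the energy splits asymptotically along `u₀` and `w i`. Were the energy
at the Nehari multiple of `u₀` larger than the infimum, a multiple of `w i` would lie in `nehariSet`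
and the two parts would add up to more than the infimum. -/
theorem energy_smul_le_of_tendsto (hf : NehariNonlinearity f F)
    (hA : (A : H1 X →ₗ[ℝ] H1 X).IsSymmetric) (hc : 0 < c)
    (hcoer : ∀ u, c * ‖u‖ ^ 2 ≤ inner ℝ (A u) u) {ι : Type*} {l : Filter ι} [l.NeBot]
    {u : ι → H1 X} {u₀ : H1 X} {m C t : ℝ} (hu : ∀ i, u i ∈ nehariSet (energy A F))
    (huC : ∀ i, ‖u i‖ ≤ C) (hum : Tendsto (fun i => energy A F (u i)) l (𝓝 m))
    (hm : ∀ v ∈ nehariSet (energy A F), m ≤ energy A F v)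
    (hu₀ : ∀ x, Tendsto (fun i => u i x) l (𝓝 (u₀ x))) (ht : 0 < t)
    (htu₀ : t • u₀ ∈ nehariSet (energy A F)) : energy A F (t • u₀) ≤ m := by
  have hfib := strictFibering_energy hf hA
  have hdiff := (contDiff_energy hf hA).differentiable one_ne_zero
  obtain ⟨δ, hδ, hδN⟩ := exists_le_abs_apply_of_mem_nehariSet hf hA hc hcoer
  have hnorm : ∀ v ∈ nehariSet (energy A F), δ ≤ ‖v‖ := fun v hv =>
    let ⟨x, hx⟩ := hδN v hv
    hx.trans (H1.abs_apply_le_norm v x)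
  have hwC (i : ι) : ‖u i - u₀‖ ≤ C + ‖u₀‖ :=
    (norm_sub_le _ _).trans (add_le_add_left (huC i) _)
  have hw₀ (x : X) : Tendsto (fun i => (u i - u₀) x) l (𝓝 0) := by
    simpa using (hu₀ x).sub_const (u₀ x)
  obtain ⟨D, hD, hsplit⟩ := exists_tendsto_zero_energy_add_le hf hA u₀ hwC hw₀ t
  have hB : Tendsto (fun i => energy A F (u i) + D i) l (𝓝 m) := by simpa using hum.add hD
  have hCpos : 0 < C + ‖u₀‖ := by
    obtain ⟨i⟩ := l.nonempty_of_neBot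
    exact add_pos_of_pos_of_nonneg (hδ.trans_le ((hnorm _ (hu i)).trans (huC i))) (norm_nonneg _)
  have hτ₀ : 0 < min t (δ / (C + ‖u₀‖)) := lt_min ht (div_pos hδ hCpos)
  have hτ : 0 < energy A F (min t (δ / (C + ‖u₀‖)) • u₀) := by
    simpa [energy_zero hf] using hfib.strictMonoOn_of_smul_mem hdiff ht htu₀ (left_mem_Icc.2 ht.le)
      ⟨hτ₀.le, min_le_left _ _⟩ hτ₀
  refine ge_of_tendsto hB ((hB.eventually_lt_const (lt_add_of_pos_right m hτ)).mono fun i hi => ?_)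
  refine (hfib.apply_le_or_add_apply_le hdiff (energy_zero hf) ht htu₀
    (exists_smul_mem_nehariSet_energy hf hA hc hcoer) (hwC i) hδ hnorm hm fun s hs =>
      (hsplit i s hs).trans ?_).resolve_right hi.not_ge
  rw [add_sub_cancel]
  gcongr
  exact hfib.apply_smul_le hdiff (hu i) hs.1

theorem exists_isMinOn_energy_nehariSet (hf : NehariNonlinearity f F)
    (hA : (A : H1 X →ₗ[ℝ] H1 X).IsSymmetric) (hc : 0 < c)
    (hcoer : ∀ u, c * ‖u‖ ^ 2 ≤ inner ℝ (A u) u) [Nonempty X] {K : Finset X}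
    (hK : ∀ u ∈ nehariSet (energy A F), ∀ x, ∃ v ∈ nehariSet (energy A F),
      energy A F v = energy A F u ∧ ∃ y ∈ K, v y = u x) :
    ∃ u ∈ nehariSet (energy A F), IsMinOn (energy A F) (nehariSet (energy A F)) u := by
  obtain ⟨u, huN, hum, δ, hδ, hδu⟩ := exists_minimizing_seq hf hA hc hcoer hK
  have hm : ∀ v ∈ nehariSet (energy A F),
      sInf (energy A F '' nehariSet (energy A F)) ≤ energy A F v := fun v hv =>
    csInf_le ⟨0, forall_mem_image.2 fun u hu => (energy_pos_of_mem_nehariSet hf hA hu).le⟩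
      (mem_image_of_mem _ hv)
  obtain ⟨B, hB⟩ := hum.bddAbove_range
  obtain ⟨C, hC⟩ := exists_norm_le_of_mem_nehariSet hf hA hc hcoer B
  have huC (n : ℕ) : ‖u n‖ ≤ C := hC _ (huN n) (hB (mem_range_self n))
  obtain ⟨u₀, hu₀⟩ := H1.exists_tendsto_apply (hyperfilter ℕ) huC
  have hne : u₀ ≠ 0 := by
    rintro rfl
    have hlim : Tendsto (fun n => ∑ y ∈ K, |u n y|) (hyperfilter ℕ) (𝓝 0) := by
      simpa using tendsto_finsetSum K fun y _ => (hu₀ y).abs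
    exact hδ.not_ge (ge_of_tendsto' hlim hδu)
  obtain ⟨t, ht, htu₀⟩ := exists_smul_mem_nehariSet_energy hf hA hc hcoer hne
  exact ⟨t • u₀, htu₀, fun v hv => (energy_smul_le_of_tendsto hf hA hc hcoer huN huC
    (hum.mono_left Nat.hyperfilter_le_atTop) hm hu₀ ht htu₀).trans (hm v hv)⟩

end Energy

/-! ### Schrödinger operators on graphs of bounded degree -/

namespace H1

variable {X Y : Type*} {φ : Y → X} {n : ℕ}

theorem sum_sq_comp_le (hφ : ∀ x, (φ ⁻¹' {x}).encard ≤ n) (u : H1 X) (s : Finset Y) :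
    ∑ y ∈ s, u (φ y) ^ 2 ≤ n * ‖u‖ ^ 2 := by
  classical
  have hcard (x : X) : (s.filter fun y => φ y = x).card ≤ n := by
    rw [← Nat.cast_le (α := ℕ∞), ← encard_coe_eq_coe_finsetCard]
    exact (encard_le_encard fun y hy => (Finset.mem_filter.1 hy).2).trans (hφ x)
  calc ∑ y ∈ s, u (φ y) ^ 2
      = ∑ x ∈ s.image φ, (s.filter fun y => φ y = x).card • u x ^ 2 :=
        Finset.sum_comp (fun x => u x ^ 2) φ
    _ ≤ ∑ x ∈ s.image φ, n * u x ^ 2 := by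
        simp only [nsmul_eq_mul]
        gcongr
        exact hcard _
    _ = n * ∑ x ∈ s.image φ, u x ^ 2 := (Finset.mul_sum _ _ _).symm
    _ ≤ n * ‖u‖ ^ 2 := by
        gcongr
        exact sum_le_hasSum _ (fun x _ => sq_nonneg _) (hasSum_sq u)

/-- The pullback `u ↦ u ∘ φ` as a bounded operator on `ℓ²`, for a map `φ` all of whose fibres have
at most `n` elements. -/
def pullback (hφ : ∀ x, (φ ⁻¹' {x}).encard ≤ n) : H1 X →L[ℝ] H1 Y :=
  LinearMap.mkContinuous
    { toFun := fun u => ⟨fun y => u (φ y), memℓp_gen' (C := n * ‖u‖ ^ 2) fun s => by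
        simpa using sum_sq_comp_le hφ u s⟩
      map_add' := fun _ _ => rfl
      map_smul' := fun _ _ => rfl } √n fun u =>
    lp.norm_le_of_forall_sum_le (by simp) (by positivity) fun s => by
      simp only [ENNReal.toReal_ofNat, Real.rpow_ofNat, mul_pow, Real.norm_eq_abs, sq_abs,
        Real.sq_sqrt n.cast_nonneg]
      exact sum_sq_comp_le hφ u s

@[simp]
theorem pullback_apply (hφ : ∀ x, (φ ⁻¹' {x}).encard ≤ n) (u : H1 X) (y : Y) :
    pullback hφ u y = u (φ y) :=
  rfl

end H1

section Graph

variable {X : Type*} {adj : X → X → Prop} {n : ℕ}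

theorem encard_preimage_source_le (hdeg : ∀ x, {y | adj x y}.encard ≤ n) (x : X) :
    ((fun e : Σ x, {y // adj x y} => e.1) ⁻¹' {x}).encard ≤ n := by
  refine (encard_le_encard_of_injOn (f := fun e => e.2.1) ?_ ?_).trans (hdeg x)
  · rintro ⟨x, y, h⟩ rfl
    exact h
  · rintro ⟨x, y, _⟩ rfl ⟨x', y', _⟩ (rfl : x' = x) (rfl : y = y')
    rfl

theorem encard_preimage_target_le [Std.Symm adj] (hdeg : ∀ x, {y | adj x y}.encard ≤ n)
    (y : X) : ((fun e : Σ x, {y // adj x y} => e.2.1) ⁻¹' {y}).encard ≤ n := by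
  refine (encard_le_encard_of_injOn (f := fun e => e.1) ?_ ?_).trans (hdeg y)
  · rintro ⟨x, y, h⟩ rfl
    exact symm_of adj h
  · rintro ⟨x, y, _⟩ rfl ⟨x', y', _⟩ (rfl : y' = y) (rfl : x = x')
    rfl

/-- The gradient of a graph of bounded degree, mapping `u` to the function `u y - u x` of the
oriented edges `(x, y)`. -/
def grad [Std.Symm adj] (hdeg : ∀ x, {y | adj x y}.encard ≤ n) :
    H1 X →L[ℝ] H1 (Σ x, {y // adj x y}) :=
  H1.pullback (encard_preimage_target_le hdeg) - H1.pullback (encard_preimage_source_le hdeg)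

theorem hasSum_gradSq [Std.Symm adj] (hdeg : ∀ x, {y | adj x y}.encard ≤ n) (u : H1 X) :
    HasSum (gradSq adj fun y => u y) (1 / 2 * ‖grad hdeg u‖ ^ 2) := by
  have h := H1.hasSum_sq (grad hdeg u)
  simp only [sq] at h ⊢
  exact (h.sigma fun x => (h.summable.sigma_factor x).hasSum).mul_left (1 / 2)

theorem gradSq_nonneg (u : X → ℝ) (x : X) : 0 ≤ gradSq adj u x :=
  mul_nonneg (by norm_num) (tsum_nonneg fun _ => mul_self_nonneg _)

theorem gradSq_comp {σ : Equiv.Perm X} (hσ : ∀ x y, adj (σ x) (σ y) ↔ adj x y) (u : X → ℝ) (x : X) :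
    gradSq adj (fun y => u (σ y)) x = gradSq adj u (σ x) := by
  have h := (σ.subtypeEquiv (p := adj x) (q := adj (σ x)) fun y => (hσ x y).symm).tsum_eq
    fun y => (u y.1 - u (σ x)) * (u y.1 - u (σ x))
  exact congrArg (1 / 2 * ·) h

/-- The operator is `-Δ + V`, in the form `½ ∇†∇ + V`. -/
theorem exists_isSymmetric_hasSum_inner [Std.Symm adj]
    (hdeg : ∀ x, {y | adj x y}.encard ≤ n) {V : X → ℝ} {C : ℝ} (hC : 0 ≤ C) (hV : ∀ x, |V x| ≤ C) :
    ∃ A : H1 X →L[ℝ] H1 X, (A : H1 X →ₗ[ℝ] H1 X).IsSymmetric ∧ ∀ u : H1 X,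
      HasSum (fun x => gradSq adj (fun y => u y) x + V x * u x ^ 2) (inner ℝ (A u) u) := by
  let D := grad hdeg
  let M : H1 X →L[ℝ] H1 X := lp.mapCLM 2 (fun x => V x • ContinuousLinearMap.id ℝ ℝ) hC
    fun x => by simpa [norm_smul] using hV x
  have hM (u : H1 X) (x : X) : M u x = V x * u x := rfl
  refine ⟨(1 / 2 : ℝ) • (D.adjoint ∘L D) + M, fun u v => ?_, fun u => ?_⟩
  · have hMsymm : inner ℝ (M u) v = inner ℝ u (M v) := by
      refine (H1.hasSum_mul (M u) v).unique ?_
      simpa only [hM, mul_left_comm, mul_assoc] using H1.hasSum_mul u (M v)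
    simp [inner_add_left, inner_add_right, inner_smul_left, inner_smul_right, hMsymm,
      ContinuousLinearMap.adjoint_inner_left, ContinuousLinearMap.adjoint_inner_right]
  · have hinner : inner ℝ (((1 / 2 : ℝ) • (D.adjoint ∘L D) + M) u) u =
        1 / 2 * ‖D u‖ ^ 2 + inner ℝ (M u) u := by
      simp [inner_add_left, inner_smul_left, ContinuousLinearMap.adjoint_inner_left]
    rw [hinner]
    simpa only [hM, mul_assoc, ← sq] using
      (hasSum_gradSq hdeg u).add (H1.hasSum_mul (M u) u)

end Graph

/-! ### Ground states on quasi-transitive graphs -/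

section FiniteRange

variable {X : Type*} {f F : X → ℝ → ℝ}

theorem exists_forall_abs_le_of_finite_range (hfin : (range f).Finite)
    (hcont : ∀ x, Continuous (f x)) (M : ℝ) : ∃ B, ∀ x t, |t| ≤ M → |f x t| ≤ B := by
  have hcompact : IsCompact (⋃ g ∈ range f, g '' Icc (-M) M) :=
    hfin.isCompact_biUnion fun g hg => isCompact_Icc.image <| by
      obtain ⟨x, rfl⟩ := hg
      exact hcont x
  obtain ⟨B, hB⟩ := hcompact.isBounded.exists_norm_le
  exact ⟨B, fun x t ht => hB _ (mem_biUnion (mem_range_self x) (mem_image_of_mem _ (abs_le.1 ht)))⟩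

theorem exists_forall_abs_le_mul_of_finite_range (hfin : (range f).Finite)
    (hcont : ∀ x, Continuous (f x)) {δ : ℝ} (hδ : 0 < δ)
    (hsmall : ∀ x t, |t| < δ → |f x t| ≤ |t|) (M : ℝ) :
    ∃ L ≥ 0, ∀ x t, |t| ≤ M → |f x t| ≤ L * |t| := by
  obtain ⟨B, hB⟩ := exists_forall_abs_le_of_finite_range hfin hcont M
  refine ⟨max 1 (B / δ), by positivity, fun x t ht => ?_⟩
  rcases lt_or_ge |t| δ with htδ | htδ
  · exact (hsmall x t htδ).trans (le_mul_of_one_le_left (abs_nonneg t) (le_max_left _ _))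
  · calc |f x t| ≤ B := hB x t ht
      _ = B / δ * δ := (div_mul_cancel₀ _ hδ.ne').symm
      _ ≤ max 1 (B / δ) * |t| := by
        gcongr
        exact le_max_right _ _

theorem abs_apply_le_mul_abs_of_ne_zero {g : ℝ → ℝ} (hg : Continuous g) {δ ε : ℝ}
    (h : ∀ t, t ≠ 0 → |t| < δ → |g t| ≤ ε * |t|) {t : ℝ} (ht : |t| < δ) : |g t| ≤ ε * |t| := by
  have hclosure : closure {t : ℝ | t ≠ 0} ∩ Metric.ball 0 δ ⊆ {t | |g t| ≤ ε * |t|} := by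
    rw [inter_comm]
    refine Metric.isOpen_ball.inter_closure.trans (closure_minimal ?_ ?_)
    · exact fun t ht => h t ht.2 (by simpa using ht.1)
    · exact isClosed_le (by fun_prop) (by fun_prop)
  exact hclosure ⟨dense_compl_singleton (0 : ℝ) t, by simpa using ht⟩

theorem NehariNonlinearity.of_finite_range (hfin : (range f).Finite)
    (hcont : ∀ x, Continuous (f x))
    (hsmall : ∀ ε > 0, ∃ δ > 0, ∀ x t, t ≠ 0 → |t| < δ → |f x t| ≤ ε * |t|)
    (hmono : ∀ x, StrictMonoOn (fun t => f x t / |t|) (Iio 0) ∧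
      StrictMonoOn (fun t => f x t / |t|) (Ioi 0))
    (hF : ∀ x t, F x t = ∫ s in (0 : ℝ)..t, f x s)
    (hsuper : ∀ M : ℝ, ∃ R > 0, ∀ x t, R ≤ |t| → M ≤ F x t / t ^ 2) : NehariNonlinearity f F := by
  have hsmall' : ∀ ε > 0, ∃ δ > 0, ∀ x t, |t| < δ → |f x t| ≤ ε * |t| := fun ε hε =>
    let ⟨δ, hδ, h⟩ := hsmall ε hε
    ⟨δ, hδ, fun x _ => abs_apply_le_mul_abs_of_ne_zero (hcont x) (h x)⟩
  obtain ⟨δ, hδ, h⟩ := hsmall' 1 one_pos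
  exact ⟨hcont, hF, exists_forall_abs_le_mul_of_finite_range hfin hcont hδ (by simpa using h),
    hsmall', hmono, hsuper⟩

end FiniteRange

section QuasiTransitive

variable {X Γ : Type*} [AddGroup Γ] [AddAction Γ X] {K : Finset X}
variable {adj : X → X → Prop} {V : X → ℝ} {f F : X → ℝ → ℝ}

theorem finite_range_of_vadd_eq {β : Type*} {P : X → β} (hK : ∀ x, ∃ γ : Γ, γ +ᵥ x ∈ K)
    (hP : ∀ (γ : Γ) x, P (γ +ᵥ x) = P x) : (range P).Finite := by
  refine (K.finite_toSet.image P).subset (range_subset_iff.2 fun x => ?_)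
  obtain ⟨γ, hγ⟩ := hK x
  exact ⟨γ +ᵥ x, hγ, hP γ x⟩

theorem exists_pos_forall_le_of_finite_range [Nonempty X] (hfin : (range V).Finite)
    (hV : ∀ x, 0 < V x) : ∃ c > 0, ∀ x, c ≤ V x := by
  obtain ⟨_, ⟨x, rfl⟩, hx⟩ := exists_min_image _ id hfin (range_nonempty V)
  exact ⟨V x, hV x, fun y => hx _ (mem_range_self y)⟩

theorem PhiF_eq_of_apply_eq {σ : Equiv.Perm X} (hadj : ∀ x y, adj (σ x) (σ y) ↔ adj x y)
    (hV : ∀ x, V (σ x) = V x) (hF : ∀ x, F (σ x) = F x) {u v : H1 X} (huv : ∀ x, v x = u (σ x)) :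
    PhiF adj V F v = PhiF adj V F u := by
  unfold PhiF
  simp only [huv, gradSq_comp hadj]
  rw [← σ.tsum_eq fun x => gradSq adj (fun y => u y) x + V x * u x ^ 2,
    ← σ.tsum_eq fun x => F x (u x)]
  simp only [hV, hF]

theorem exists_mem_nehari_apply_eq (hadj : ∀ (γ : Γ) x y, adj (γ +ᵥ x) (γ +ᵥ y) ↔ adj x y)
    (hV : ∀ (γ : Γ) x, V (γ +ᵥ x) = V x) (hF : ∀ (γ : Γ) x, F (γ +ᵥ x) = F x)
    (hΦ : Differentiable ℝ (PhiF adj V F)) {u : H1 X} (hu : u ∈ Nehari adj V F) (γ : Γ) :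
    ∃ v ∈ Nehari adj V F, PhiF adj V F v = PhiF adj V F u ∧ ∀ x, v (γ +ᵥ x) = u x := by
  let σ := AddAction.toPerm (β := X) (-γ)
  have hσ (y : X) : (σ ⁻¹' {y}).encard ≤ (1 : ℕ) := by
    rw [Nat.cast_one, encard_le_one_iff_subsingleton]
    exact subsingleton_singleton.preimage σ.injective
  have hinv (v : H1 X) : PhiF adj V F (H1.pullback hσ v) = PhiF adj V F v :=
    PhiF_eq_of_apply_eq (hadj (-γ)) (hV (-γ)) (hF (-γ)) (H1.pullback_apply hσ v)
  have hinj : Function.Injective (H1.pullback hσ) := fun v w h => lp.ext <|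
    σ.surjective.injective_comp_right (congrArg (fun z : H1 X => (z : X → ℝ)) h)
  exact ⟨H1.pullback hσ u, map_mem_nehariSet hΦ hinj hinv hu, hinv u, fun x =>
    congrArg u (neg_vadd_vadd γ x)⟩

theorem stmt0_general [Nonempty X] [Std.Symm adj] {n : ℕ} (hdeg : ∀ x, {y | adj x y}.encard ≤ n)
    (hadj : ∀ (γ : Γ) x y, adj (γ +ᵥ x) (γ +ᵥ y) ↔ adj x y) (hK : ∀ x, ∃ γ : Γ, γ +ᵥ x ∈ K)
    (hVper : ∀ (γ : Γ) x, V (γ +ᵥ x) = V x) (hfper : ∀ (γ : Γ) x, f (γ +ᵥ x) = f x)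
    (hVpos : ∀ x, 0 < V x) (hcont : ∀ x, Continuous (f x))
    (hsmall : ∀ ε > 0, ∃ δ > 0, ∀ x t, t ≠ 0 → |t| < δ → |f x t| ≤ ε * |t|)
    (hmono : ∀ x, StrictMonoOn (fun t => f x t / |t|) (Iio 0) ∧
      StrictMonoOn (fun t => f x t / |t|) (Ioi 0))
    (hF : ∀ x t, F x t = ∫ s in (0 : ℝ)..t, f x s)
    (hsuper : ∀ M : ℝ, ∃ R > 0, ∀ x t, R ≤ |t| → M ≤ F x t / t ^ 2) :
    ∃ u : H1 X, u ≠ 0 ∧ fderiv ℝ (PhiF adj V F) u = 0 ∧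
      PhiF adj V F u = sInf (PhiF adj V F '' Nehari adj V F) := by
  have hf : NehariNonlinearity f F :=
    .of_finite_range (finite_range_of_vadd_eq hK hfper) hcont hsmall hmono hF hsuper
  have hVfin := finite_range_of_vadd_eq hK hVper
  obtain ⟨c, hc, hcV⟩ := exists_pos_forall_le_of_finite_range hVfin hVpos
  obtain ⟨C, hC, hVC⟩ := hVfin.isBounded.exists_pos_norm_le
  obtain ⟨A, hA, hAV⟩ :=
    exists_isSymmetric_hasSum_inner hdeg hC.le fun x => hVC _ (mem_range_self x)
  have hcoer (u : H1 X) : c * ‖u‖ ^ 2 ≤ inner ℝ (A u) u :=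
    hasSum_le (fun x => le_add_of_nonneg_of_le (gradSq_nonneg _ x) (by gcongr; exact hcV x))
      ((H1.hasSum_sq u).mul_left c) (hAV u)
  have hΦ : PhiF adj V F = energy A F := funext fun u => by rw [PhiF, (hAV u).tsum_eq, energy]
  have hFper (γ : Γ) (x : X) : F (γ +ᵥ x) = F x := funext fun t => by rw [hF, hF, hfper]
  have hC1 := contDiff_energy hf hA
  obtain ⟨u, hu, hmin⟩ := exists_isMinOn_energy_nehariSet hf hA hc hcoer (K := K) fun u hu x => by
    obtain ⟨γ, hγ⟩ := hK x
    rw [← hΦ] at hu hC1 ⊢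
    obtain ⟨v, hv, hvu, hvx⟩ :=
      exists_mem_nehari_apply_eq hadj hVper hFper (hC1.differentiable one_ne_zero) hu γ
    exact ⟨v, hv, hvu, _, hγ, hvx x⟩
  refine ⟨u, hu.1, ?_, ?_⟩
  · rw [hΦ]
    exact (strictFibering_energy hf hA).fderiv_eq_zero_of_isMinOn hC1 hu hmin
  · rw [← hΦ] at hu hmin
    exact (IsLeast.csInf_eq ⟨mem_image_of_mem _ hu, forall_mem_image.2 fun v hv => hmin hv⟩).symm

end QuasiTransitive

/-! ### The lattice `ℤ^N` -/

section Lattice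

variable {N : ℕ}

instance : Std.Symm (adjZ N) where
  symm x y h := by simpa only [adjZ, ← Int.natAbs_neg (x _ - y _), neg_sub] using h

theorem adjZ_vadd_iff (k x y : Fin N → ℤ) : adjZ N (k + x) (k + y) ↔ adjZ N x y := by
  simp [adjZ]

theorem encard_adjZ_le (x : Fin N → ℤ) :
    {y | adjZ N x y}.encard ≤ (Finset.Icc (-1 : Fin N → ℤ) 1).card := by
  rw [← encard_coe_eq_coe_finsetCard]
  refine encard_le_encard_of_injOn (f := fun y => x - y) (fun y hy => ?_)
    sub_right_injective.injOn
  have hle (i : Fin N) : |x i - y i| ≤ 1 := by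
    rw [Int.abs_eq_natAbs]
    exact_mod_cast (Finset.single_le_sum (f := fun i => (x i - y i).natAbs)
      (fun _ _ => Nat.zero_le _) (Finset.mem_univ i)).trans_eq hy
  exact Finset.mem_coe.2 (Finset.mem_Icc.2
    ⟨fun i => (abs_le.1 (hle i)).1, fun i => (abs_le.1 (hle i)).2⟩)

/-- The group of periods of a function on an additive group. -/
def periods {G β : Type*} [AddGroup G] (P : G → β) : AddSubgroup G where
  carrier := {k | ∀ x, P (k + x) = P x}
  zero_mem' x := by rw [zero_add]
  add_mem' hk hl x := by rw [add_assoc, hk, hl]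
  neg_mem' {k} hk x := by rw [← hk, add_neg_cancel_left]

theorem natCast_smul_mem_periods {β : Type*} {P : (Fin N → ℤ) → β} {T : ℕ}
    (hP : ∀ x i, P (Function.update x i (x i + T)) = P x) (k : Fin N → ℤ) :
    (T : ℤ) • k ∈ periods P := by
  have hsingle (i : Fin N) : Pi.single i (T : ℤ) ∈ periods P := fun x => by
    rw [← hP x i]
    congr 1
    ext j
    rcases eq_or_ne j i with rfl | hj
    · simp [add_comm]
    · simp [hj]
  have hk : (T : ℤ) • k = ∑ i, k i • Pi.single i (T : ℤ) := by
    ext j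
    simp [Finset.sum_apply, Pi.single_apply, mul_comm]
  rw [hk]
  exact sum_mem fun i _ => zsmul_mem (hsingle i) _

theorem exists_natCast_smul_add_mem_Icc {T : ℕ} (hT : 0 < T) (x : Fin N → ℤ) :
    ∃ k : Fin N → ℤ, (T : ℤ) • k + x ∈ Finset.Icc 0 (fun _ => (T : ℤ)) := by
  have hT' : (0 : ℤ) < T := by exact_mod_cast hT
  have hmod (i : Fin N) : (T : ℤ) * -(x i / T) + x i = x i % T := by
    rw [Int.emod_def]
    ring
  refine ⟨fun i => -(x i / T), Finset.mem_Icc.2 ⟨fun i => ?_, fun i => ?_⟩⟩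
  · exact (Int.emod_nonneg _ hT'.ne').trans_eq (hmod i).symm
  · exact (hmod i).trans_le (Int.emod_lt_of_pos _ hT').le

theorem exists_periods_vadd_mem_Icc {β : Type*} {P : (Fin N → ℤ) → β} {T : ℕ} (hT : 0 < T)
    (hP : ∀ x i, P (Function.update x i (x i + T)) = P x) (x : Fin N → ℤ) :
    ∃ γ : periods P, γ +ᵥ x ∈ Finset.Icc 0 (fun _ => (T : ℤ)) := by
  obtain ⟨k, hk⟩ := exists_natCast_smul_add_mem_Icc hT x
  exact ⟨⟨(T : ℤ) • k, natCast_smul_mem_periods hP k⟩, hk⟩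

end Lattice

end

/-- Theorem 1.1: existence of a ground state for `−Δu + V(x)u = f(x,u)` on `ℤ^N`
with `T`-periodic positive potential and `T`-periodic nonlinearity. -/
theorem stmt0 (N : ℕ) (hN : 1 ≤ N) (T : ℕ) (hT : 0 < T)
    (f : (Fin N → ℤ) → ℝ → ℝ) (hcont : ∀ x, Continuous (f x))
    (a q : ℝ) (ha : 0 < a) (hq : 2 < q)
    (hgrowth : ∀ x t, |f x t| ≤ a * (|t| + |t| ^ (q - 1)))
    (Vp : (Fin N → ℤ) → ℝ)
    (hVper : ∀ (x : Fin N → ℤ) (i : Fin N), Vp (Function.update x i (x i + T)) = Vp x)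
    (hfper : ∀ (x : Fin N → ℤ) (i : Fin N) (t : ℝ),
      f (Function.update x i (x i + T)) t = f x t)
    (hVpos : ∀ x, 0 < Vp x)
    (hsmall : ∀ ε > 0, ∃ δ > 0, ∀ x t, t ≠ 0 → |t| < δ → |f x t| ≤ ε * |t|)
    (hmono : ∀ x, StrictMonoOn (fun t => f x t / |t|) (Set.Iio 0) ∧
             StrictMonoOn (fun t => f x t / |t|) (Set.Ioi 0))
    (F : (Fin N → ℤ) → ℝ → ℝ) (hF : ∀ x t, F x t = ∫ s in (0:ℝ)..t, f x s)
    (hsuper : ∀ M : ℝ, ∃ R > 0, ∀ x t, R ≤ |t| → M ≤ F x t / t ^ 2) :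
    ∃ u : H1 (Fin N → ℤ), u ≠ 0 ∧ fderiv ℝ (PhiF (adjZ N) Vp F) u = 0 ∧
      PhiF (adjZ N) Vp F u = sInf (PhiF (adjZ N) Vp F '' Nehari (adjZ N) Vp F) :=
  stmt0_general (Γ := periods fun x => (Vp x, f x)) encard_adjZ_le (fun γ => adjZ_vadd_iff γ.1)
    (exists_periods_vadd_mem_Icc hT fun x i => Prod.ext (hVper x i) (funext (hfper x i)))
    (fun γ x => congrArg Prod.fst (γ.2 x)) (fun γ x => congrArg Prod.snd (γ.2 x)) hVpos hcont
    hsmall hmono hF hsuper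
end

section
/- In the Nehari setting, let I(u) = Σ_x F(x,u(x)) with I'(u)w = Σ_x f(x,u(x))w(x). Then for every u ∈ H¹(V) with u ≠ 0, the map s ↦ I'(su)u / s is strictly increasing on (0,∞): for all 0 < s < t one has I'(su)u/s < I'(tu)u/t. -/
open scoped ENNReal

/-!
At a vertex where `u x ≠ 0`, the summand of `I'(su)u / s` is
`f x (s * u x) * u x / s = (f x (s * u x) / |s * u x|) * (u x * |u x|)`, and the monotonicity of
`t ↦ f x t / |t|` makes it strictly increasing in `s`: when `u x < 0`, both `s ↦ s * u x` and
multiplication by `u x * |u x|` reverse the order. The series converge because `u` tends to `0`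
along the cofinite filter, so that only the behaviour of `f` near `0` matters.
-/

section

open Filter Set Asymptotics
open scoped Topology

lemma strictMonoOn_apply_mul_mul_div {𝕜 : Type*} [Field 𝕜] [LinearOrder 𝕜] [IsStrictOrderedRing 𝕜]
    {φ : 𝕜 → 𝕜} (hneg : StrictMonoOn (fun t => φ t / |t|) (Iio 0))
    (hpos : StrictMonoOn (fun t => φ t / |t|) (Ioi 0)) {c : 𝕜} (hc : c ≠ 0) :
    StrictMonoOn (fun s => φ (s * c) * c / s) (Ioi 0) := by
  have factor : EqOn (fun s => φ (s * c) / |s * c| * (c * |c|)) (fun s => φ (s * c) * c / s)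
      (Ioi 0) := by
    intro s (hs : 0 < s)
    have : |c| ≠ 0 := abs_ne_zero.mpr hc
    simp only [abs_mul, abs_of_pos hs]
    field_simp
  refine StrictMonoOn.congr (fun s (hs : 0 < s) t (ht : 0 < t) hst => ?_) factor
  rcases hc.lt_or_gt with hc | hc
  · exact mul_lt_mul_of_neg_right
      (hneg (mul_neg_of_pos_of_neg ht hc) (mul_neg_of_pos_of_neg hs hc)
        (mul_lt_mul_of_neg_right hst hc))
      (mul_neg_of_neg_of_pos hc (abs_pos_of_neg hc))
  · exact mul_lt_mul_of_pos_right
      (hpos (mul_pos hs hc) (mul_pos ht hc) (mul_lt_mul_of_pos_right hst hc))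
      (mul_pos hc (abs_pos_of_pos hc))

lemma strictMonoOn_tsum {ι α β : Type*} [Preorder β] [AddCommGroup α] [PartialOrder α]
    [IsOrderedAddMonoid α] [TopologicalSpace α] [IsTopologicalAddGroup α] [OrderClosedTopology α]
    {g : ι → β → α} {S : Set β} (hsum : ∀ s ∈ S, Summable fun i => g i s)
    (hmono : ∀ i, MonotoneOn (g i) S) {i₀ : ι} (hstrict : StrictMonoOn (g i₀) S) :
    StrictMonoOn (fun s => ∑' i, g i s) S := fun s hs t ht hst =>
  Summable.tsum_lt_tsum (fun i => hmono i hs ht hst.le) (hstrict hs ht hst) (hsum s hs) (hsum t ht)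

lemma tendsto_cofinite_zero_of_memℓp {ι E : Type*} [NormedAddCommGroup E] {p : ℝ≥0∞}
    (hp : 0 < p.toReal) {u : ι → E} (hu : Memℓp u p) : Tendsto u cofinite (𝓝 0) := by
  have hpow : Tendsto (fun i => (‖u i‖ ^ p.toReal) ^ p.toReal⁻¹) cofinite (𝓝 0) := by
    simpa only [Real.zero_rpow (inv_ne_zero hp.ne')] using
      (hu.summable hp).tendsto_cofinite_zero.rpow_const (Or.inr (inv_nonneg.mpr hp.le))
  refine tendsto_zero_iff_norm_tendsto_zero.mpr (hpow.congr fun i => ?_)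
  exact Real.rpow_rpow_inv (norm_nonneg _) hp.ne'

lemma isLittleO_snd_of_forall_norm_le {ι E F : Type*} [SeminormedAddCommGroup E]
    [SeminormedAddCommGroup F] {f : ι → E → F}
    (h : ∀ ε > 0, ∃ δ > 0, ∀ i t, t ≠ 0 → ‖t‖ < δ → ‖f i t‖ ≤ ε * ‖t‖) :
    (fun z : ι × E => f z.1 z.2) =o[⊤ ×ˢ 𝓝[≠] 0] Prod.snd := by
  refine isLittleO_iff.mpr fun ε hε => ?_
  obtain ⟨δ, hδ, hle⟩ := h ε hε
  have hball : ∀ᶠ t : E in 𝓝[≠] 0, t ≠ 0 ∧ ‖t‖ < δ := by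
    filter_upwards [self_mem_nhdsWithin, nhdsWithin_le_nhds (Metric.ball_mem_nhds 0 hδ)]
      with t hne hlt
    exact ⟨hne, mem_ball_zero_iff.mp hlt⟩
  filter_upwards [tendsto_snd.eventually hball] with z hz
  exact hle z.1 z.2 hz.1 hz.2

section NormedField

variable {ι 𝕜 : Type*} [NormedField 𝕜] {f : ι → 𝕜 → 𝕜}

lemma isBigO_mul_snd {r : ℝ}
    (hf : (fun z : ι × 𝕜 => f z.1 z.2) =O[⊤ ×ˢ 𝓝[≠] 0] fun z => ‖z.2‖ ^ (r - 1)) :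
    (fun z : ι × 𝕜 => f z.1 z.2 * z.2) =O[⊤ ×ˢ 𝓝 0] fun z => ‖z.2‖ ^ r := by
  rw [← nhdsNE_sup_pure, Filter.prod_sup]
  refine IsBigO.sup ?_ ?_
  · have hne : ∀ᶠ z : ι × 𝕜 in ⊤ ×ˢ 𝓝[≠] 0, z.2 ≠ 0 :=
      tendsto_snd.eventually eventually_mem_nhdsWithin
    refine (hf.mul (isBigO_refl Prod.snd _).norm_right).congr' .rfl (hne.mono fun z hz => ?_)
    simp only [Real.rpow_sub_one (norm_ne_zero_iff.mpr hz),
      div_mul_cancel₀ _ (norm_ne_zero_iff.mpr hz)]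
  · have hzero : ∀ᶠ z : ι × 𝕜 in ⊤ ×ˢ pure 0, z.2 = 0 :=
      tendsto_snd.eventually (p := (· = 0)) (eventually_pure.mpr rfl)
    exact (isBigO_zero _ _).congr' (hzero.mono fun z hz => by simp [hz]) .rfl

lemma summable_apply_mul_of_memℓp [CompleteSpace 𝕜] {p : ℝ≥0∞} (hp : 0 < p.toReal)
    (hf : (fun z : ι × 𝕜 => f z.1 z.2) =O[⊤ ×ˢ 𝓝[≠] 0] fun z => ‖z.2‖ ^ (p.toReal - 1))
    {u : ι → 𝕜} (hu : Memℓp u p) : Summable fun i => f i (u i) * u i :=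
  summable_of_isBigO (hu.summable hp) <| (isBigO_mul_snd hf).comp_tendsto <|
    tendsto_top.prodMk (tendsto_cofinite_zero_of_memℓp hp hu)

end NormedField

theorem stmt6_general {ι : Type*} {p : ℝ≥0∞} (hp : 0 < p.toReal) {f : ι → ℝ → ℝ}
    (hf : (fun z : ι × ℝ => f z.1 z.2) =O[⊤ ×ˢ 𝓝[≠] 0] fun z => ‖z.2‖ ^ (p.toReal - 1))
    (hmono : ∀ i, StrictMonoOn (fun t => f i t / |t|) (Iio 0) ∧
      StrictMonoOn (fun t => f i t / |t|) (Ioi 0))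
    {u : lp (fun _ : ι => ℝ) p} (hu : u ≠ 0) :
    StrictMonoOn (fun s => (∑' i, f i (s * u i) * u i) / s) (Ioi 0) := by
  have hsum : ∀ s ∈ Ioi (0 : ℝ), Summable fun i => f i (s * u i) * u i / s := by
    intro s (hs : 0 < s)
    have h := summable_apply_mul_of_memℓp hp hf ((lp.memℓp u).const_smul s)
    refine (h.div_const (s * s)).congr fun i => ?_
    simp only [Pi.smul_apply, smul_eq_mul]
    field_simp
  have hstrict : ∀ i, u i ≠ 0 → StrictMonoOn (fun s => f i (s * u i) * u i / s) (Ioi 0) :=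
    fun i => strictMonoOn_apply_mul_mul_div (hmono i).1 (hmono i).2
  have hmonotone : ∀ i, MonotoneOn (fun s => f i (s * u i) * u i / s) (Ioi 0) := by
    intro i
    by_cases hi : u i = 0
    · simpa only [hi, mul_zero, zero_div] using monotoneOn_const
    · exact (hstrict i hi).monotoneOn
  obtain ⟨i₀, hi₀⟩ : ∃ i, u i ≠ 0 := by
    by_contra! h
    exact hu (lp.ext (funext h))
  simpa only [tsum_div_const] using strictMonoOn_tsum hsum hmonotone (hstrict i₀ hi₀)

end

/-- Proposition 3.2 (ii): for `u ≠ 0`, the map `s ↦ I'(su)u/s` is strictly increasing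
on `(0,∞)`, where `I'(su)u = Σ_x f(x,su(x))u(x)`. -/
theorem stmt6
    {Vtx : Type*} (adj : Vtx → Vtx → Prop) (D : ℕ)
    (hsym : ∀ x y, adj x y → adj y x)
    (hirr : ∀ x, ¬ adj x x)
    (hfin : ∀ x, {y | adj x y}.Finite)
    (hdeg : ∀ x, {y | adj x y}.ncard ≤ D)
    (Vp : Vtx → ℝ) (C1 C2 : ℝ) (hC1 : 0 < C1)
    (hVbd : ∀ x, C1 ≤ Vp x ∧ Vp x ≤ C2)
    (f : Vtx → ℝ → ℝ) (hcont : ∀ x, Continuous (f x))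
    (a q : ℝ) (ha : 0 < a) (hq : 2 < q)
    (hgrowth : ∀ x t, |f x t| ≤ a * (|t| + |t| ^ (q - 1)))
    (hsmall : ∀ ε > 0, ∃ δ > 0, ∀ x t, t ≠ 0 → |t| < δ → |f x t| ≤ ε * |t|)
    (hmono : ∀ x, StrictMonoOn (fun t => f x t / |t|) (Set.Iio 0) ∧
             StrictMonoOn (fun t => f x t / |t|) (Set.Ioi 0))
    (F : Vtx → ℝ → ℝ) (hF : ∀ x t, F x t = ∫ s in (0:ℝ)..t, f x s)
    (hsuper : ∀ M : ℝ, ∃ R > 0, ∀ x t, R ≤ |t| → M ≤ F x t / t ^ 2)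
    :
    ∀ u : H1 Vtx, u ≠ 0 → ∀ s t : ℝ, 0 < s → s < t →
      (∑' x, f x (s * u x) * u x) / s < (∑' x, f x (t * u x) * u x) / t := by
  intro u hu s t hs hst
  have hf := (isLittleO_snd_of_forall_norm_le (E := ℝ) (F := ℝ) hsmall).isBigO.norm_right
  exact stmt6_general (p := 2) (by simp) (hf.congr_right fun z => by norm_num) hmono hu
    hs (hs.trans hst) hst
end
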